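/- arXiv:1312.1714 — 3 statements merged into one kernel-verified Lean document; each statement's English description precedes it below -/
import Mathlib

section
/- For every ε > 0 there exists a constant C > 0 such that for every integer q > 1 and every positive definite matrix Λ' ∈ M_{2,2}(ℤ) with all entries of absolute value at most 3q², the number of pairs (x,y) ∈ (ℤ³)² satisfying ⟨x,x⟩ = Λ'_{1,1}, ⟨x,y⟩ = Λ'_{1,2}, and ⟨y,y⟩ = Λ'_{2,2} is at most C · q^{ε} · gcd(Λ'_{1,1}, Λ'_{1,2}, Λ'_{2,2}). -/
open Matrix

/-- The divisor bound: the number of divisors of `n` is `O(n ^ δ)` for every `δ > 0`. -/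
theorem exists_card_divisors_le_rpow (δ : ℝ) (hδ : 0 < δ) :
    ∃ C : ℝ, 0 < C ∧ ∀ n : ℕ, n ≠ 0 → (n.divisors.card : ℝ) ≤ C * (n : ℝ) ^ δ := by
  have hlog : 0 < Real.log 2 := Real.log_pos one_lt_two
  set K : ℝ := 1 + 1 / (δ * Real.log 2) with hK
  have hK1 : 1 ≤ K := by
    have : 0 < 1 / (δ * Real.log 2) := by positivity
    linarith
  set P : ℕ := ⌈(2 : ℝ) ^ (1 / δ)⌉₊ with hP
  have key : ∀ p k : ℕ, p.Prime →
      ((k + 1 : ℕ) : ℝ) ≤ (if p < P then K else 1) * ((p : ℝ) ^ k) ^ δ := by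
    intro p k hp
    have hp0 : (0 : ℝ) ≤ p := Nat.cast_nonneg p
    have hp2 : (2 : ℝ) ≤ p := by exact_mod_cast hp.two_le
    have hswap : ((p : ℝ) ^ k) ^ δ = ((p : ℝ) ^ δ) ^ k := by
      rw [← Real.rpow_natCast, ← Real.rpow_mul hp0, mul_comm, Real.rpow_mul hp0,
        Real.rpow_natCast]
    rw [hswap]
    split_ifs with h
    · have h1 : Real.exp (k * (δ * Real.log 2)) ≤ ((p : ℝ) ^ δ) ^ k := by
        have : Real.exp (k * (δ * Real.log 2)) = ((2 : ℝ) ^ δ) ^ k := by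
          rw [Real.rpow_def_of_pos two_pos, ← Real.exp_nat_mul]
          ring_nf
        rw [this]
        gcongr
      have h2 := Real.add_one_le_exp (k * (δ * Real.log 2))
      have h3 : ((k + 1 : ℕ) : ℝ) ≤ K * (k * (δ * Real.log 2) + 1) := by
        have : K * (k * (δ * Real.log 2) + 1)
            = k * (δ * Real.log 2) + 1 + k + 1 / (δ * Real.log 2) := by
          rw [hK]; field_simp; ring
        rw [this]
        have h4 : 0 ≤ k * (δ * Real.log 2) := by positivity
        have h5 : 0 ≤ 1 / (δ * Real.log 2) := by positivity
        push_cast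
        linarith
      calc ((k + 1 : ℕ) : ℝ) ≤ K * (k * (δ * Real.log 2) + 1) := h3
        _ ≤ K * ((p : ℝ) ^ δ) ^ k := by gcongr; linarith
    · have h1 : (2 : ℝ) ≤ (p : ℝ) ^ δ := by
        have h2 : (2 : ℝ) ^ (1 / δ) ≤ p :=
          (Nat.le_ceil _).trans (by exact_mod_cast not_lt.mp h)
        calc (2 : ℝ) = ((2 : ℝ) ^ (1 / δ)) ^ δ := by
              rw [← Real.rpow_mul zero_le_two, one_div_mul_cancel hδ.ne', Real.rpow_one]
          _ ≤ (p : ℝ) ^ δ := by gcongr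
      calc ((k + 1 : ℕ) : ℝ) ≤ (2 : ℝ) ^ k := by exact_mod_cast Nat.lt_two_pow_self
        _ ≤ 1 * ((p : ℝ) ^ δ) ^ k := by rw [one_mul]; gcongr
  refine ⟨K ^ P, by positivity, fun n hn => ?_⟩
  have hprod : (n : ℝ) ^ δ = ∏ p ∈ n.primeFactors, ((p : ℝ) ^ n.factorization p) ^ δ := by
    rw [Real.finsetProd_rpow _ _ (fun p _ => by positivity)]
    congr 1
    conv_lhs => rw [← Nat.prod_factorization_pow_eq_self hn]
    rw [Finsupp.prod, Nat.support_factorization]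
    push_cast
    rfl
  have hsmall : ∏ p ∈ n.primeFactors, (if p < P then K else 1) ≤ K ^ P := by
    rw [Finset.prod_ite, Finset.prod_const, Finset.prod_const_one, mul_one]
    refine pow_le_pow_right₀ hK1 ?_
    calc _ ≤ (Finset.range P).card := Finset.card_le_card fun p hp => by
            simpa using (Finset.mem_filter.mp hp).2
      _ = P := Finset.card_range P
  calc (n.divisors.card : ℝ)
      = ∏ p ∈ n.primeFactors, ((n.factorization p + 1 : ℕ) : ℝ) := by
        rw [Nat.card_divisors hn]; push_cast; rfl
    _ ≤ ∏ p ∈ n.primeFactors,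
          (if p < P then K else 1) * ((p : ℝ) ^ n.factorization p) ^ δ :=
        Finset.prod_le_prod (fun _ _ => by positivity)
          fun p hp => key p _ (Nat.prime_of_mem_primeFactors hp)
    _ ≤ K ^ P * (n : ℝ) ^ δ := by
        rw [Finset.prod_mul_distrib, ← hprod]
        gcongr

theorem exists_gcd_gcd_eq (x y z : ℤ) :
    ∃ r s t : ℤ, (Int.gcd (Int.gcd x y) z : ℤ) = r * x + s * y + t * z := by
  refine ⟨Int.gcdA x y * Int.gcdA (Int.gcd x y) z, Int.gcdB x y * Int.gcdA (Int.gcd x y) z,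
    Int.gcdB (Int.gcd x y) z, ?_⟩
  linear_combination Int.gcd_eq_gcd_ab (Int.gcd x y) z
    + Int.gcdA (Int.gcd x y) z * Int.gcd_eq_gcd_ab x y

theorem gcd_gcd_dvd (x y z : ℤ) :
    (Int.gcd (Int.gcd x y) z : ℤ) ∣ x ∧ (Int.gcd (Int.gcd x y) z : ℤ) ∣ y ∧
      (Int.gcd (Int.gcd x y) z : ℤ) ∣ z :=
  ⟨(Int.gcd_dvd_left _ _).trans (Int.gcd_dvd_left _ _),
    (Int.gcd_dvd_left _ _).trans (Int.gcd_dvd_right _ _), Int.gcd_dvd_right _ _⟩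

/-- If `(σ₁, σ₂)` is unimodular modulo `d` and the rank one matrices `σσᵀ`, `ττᵀ` agree modulo
`d`, then `d` divides all products `(τᵢ - σᵢ)(τⱼ + σⱼ)`. -/
theorem dvd_sub_mul_add {d σ₁ σ₂ τ₁ τ₂ : ℤ} (hσ : ∃ u v k : ℤ, u * σ₁ + v * σ₂ + k * d = 1)
    (h₁₁ : d ∣ σ₁ * σ₁ - τ₁ * τ₁) (h₁₂ : d ∣ σ₁ * σ₂ - τ₁ * τ₂) (h₂₂ : d ∣ σ₂ * σ₂ - τ₂ * τ₂) :
    d ∣ (τ₁ - σ₁) * (τ₁ + σ₁) ∧ d ∣ (τ₁ - σ₁) * (τ₂ + σ₂) ∧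
      d ∣ (τ₂ - σ₂) * (τ₁ + σ₁) ∧ d ∣ (τ₂ - σ₂) * (τ₂ + σ₂) := by
  obtain ⟨u, v, k, h⟩ := hσ
  obtain ⟨A, hA⟩ := h₁₁
  obtain ⟨B, hB⟩ := h₁₂
  obtain ⟨C, hC⟩ := h₂₂
  have hX : σ₁ * τ₂ - τ₁ * σ₂ = d * (u * (A * τ₂ - B * τ₁) + v * (B * τ₂ - C * τ₁)
      + k * (σ₁ * τ₂ - τ₁ * σ₂)) := by
    linear_combination -(σ₁ * τ₂ - τ₁ * σ₂) * h + u * (τ₂ * hA - τ₁ * hB)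
      + v * (τ₂ * hB - τ₁ * hC)
  refine ⟨⟨-A, ?_⟩, ⟨-B - (u * (A * τ₂ - B * τ₁) + v * (B * τ₂ - C * τ₁)
      + k * (σ₁ * τ₂ - τ₁ * σ₂)), ?_⟩, ⟨-B + (u * (A * τ₂ - B * τ₁) + v * (B * τ₂ - C * τ₁)
      + k * (σ₁ * τ₂ - τ₁ * σ₂)), ?_⟩, ⟨-C, ?_⟩⟩
  · linear_combination -hA
  · linear_combination -hB - hX
  · linear_combination -hB + hX
  · linear_combination -hC

/-- The vectors `τ` with `ττᵀ ≡ σσᵀ` modulo `d` and the same gcds of `d, τ - σ` and `d, τ + σ`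
agree modulo `d` up to `2`-torsion. -/
theorem dvd_two_mul_of_gcd_dvd {d σ₁ σ₂ τ₁ τ₂ x : ℤ}
    (hσ : ∃ u v k : ℤ, u * σ₁ + v * σ₂ + k * d = 1)
    (h₁₁ : d ∣ σ₁ * σ₁ - τ₁ * τ₁) (h₁₂ : d ∣ σ₁ * σ₂ - τ₁ * τ₂) (h₂₂ : d ∣ σ₂ * σ₂ - τ₂ * τ₂)
    (hx₁ : (Int.gcd (Int.gcd d (τ₁ - σ₁)) (τ₂ - σ₂) : ℤ) ∣ x)
    (hx₂ : (Int.gcd (Int.gcd d (τ₁ + σ₁)) (τ₂ + σ₂) : ℤ) ∣ x) : d ∣ 2 * x := by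
  obtain ⟨k₁, k₂, k₃, k₄⟩ := dvd_sub_mul_add hσ h₁₁ h₁₂ h₂₂
  obtain ⟨r, s, t, h⟩ := exists_gcd_gcd_eq d (τ₁ - σ₁) (τ₂ - σ₂)
  obtain ⟨r', s', t', h'⟩ := exists_gcd_gcd_eq d (τ₁ + σ₁) (τ₂ + σ₂)
  obtain ⟨d₁, d₂, d₃⟩ := gcd_gcd_dvd d (τ₁ - σ₁) (τ₂ - σ₂)
  obtain ⟨e₁, e₂, e₃⟩ := gcd_gcd_dvd d (τ₁ + σ₁) (τ₂ + σ₂)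
  set g : ℤ := (Int.gcd (Int.gcd d (τ₁ - σ₁)) (τ₂ - σ₂) : ℤ)
  set g' : ℤ := (Int.gcd (Int.gcd d (τ₁ + σ₁)) (τ₂ + σ₂) : ℤ)
  have hgg : d ∣ g * g' := by
    have : g * g' = d * (r * g' + (s * (τ₁ - σ₁) + t * (τ₂ - σ₂)) * r')
        + (s * s' * ((τ₁ - σ₁) * (τ₁ + σ₁)) + s * t' * ((τ₁ - σ₁) * (τ₂ + σ₂))
        + t * s' * ((τ₂ - σ₂) * (τ₁ + σ₁)) + t * t' * ((τ₂ - σ₂) * (τ₂ + σ₂))) := by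
      rw [h, h']; ring
    rw [this]
    exact dvd_add (dvd_mul_right _ _) (dvd_add (dvd_add (dvd_add (k₁.mul_left _)
      (k₂.mul_left _)) (k₃.mul_left _)) (k₄.mul_left _))
  have hc : (Int.gcd g g' : ℤ) ∣ 2 := by
    have c₁ : (Int.gcd g g' : ℤ) ∣ g := Int.gcd_dvd_left _ _
    have c₂ : (Int.gcd g g' : ℤ) ∣ g' := Int.gcd_dvd_right _ _
    obtain ⟨u, v, k, hu⟩ := hσ
    have : (2 : ℤ) = u * ((τ₁ + σ₁) - (τ₁ - σ₁)) + v * ((τ₂ + σ₂) - (τ₂ - σ₂)) + 2 * k * d := by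
      linear_combination -2 * hu
    rw [this]
    exact dvd_add (dvd_add ((dvd_sub (c₂.trans e₂) (c₁.trans d₂)).mul_left _)
      ((dvd_sub (c₂.trans e₃) (c₁.trans d₃)).mul_left _)) ((c₁.trans d₁).mul_left _)
  refine dvd_trans ?_ (mul_dvd_mul_right hc x)
  rw [Int.gcd_eq_gcd_ab g g', add_mul]
  refine dvd_add ?_ ?_
  · rw [mul_right_comm]
    exact (hgg.trans (mul_dvd_mul_left g hx₂)).mul_right _
  · rw [mul_right_comm]
    exact (hgg.trans (by rw [mul_comm g g']; exact mul_dvd_mul_left g' hx₁)).mul_right _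

theorem dvd_sub_of_dvd_two_mul {d x y : ℤ} (hd : 0 < d) (h : d ∣ 2 * (x - y))
    (hxy : 2 * (x % d) < d ↔ 2 * (y % d) < d) : d ∣ x - y := by
  have hx := Int.emod_add_mul_ediv x d
  have hy := Int.emod_add_mul_ediv y d
  have hx0 := Int.emod_nonneg x hd.ne'
  have hy0 := Int.emod_nonneg y hd.ne'
  have hx1 := Int.emod_lt_of_pos x hd
  have hy1 := Int.emod_lt_of_pos y hd
  have h2 : d ∣ 2 * (x % d - y % d) := by
    have : 2 * (x % d - y % d) = 2 * (x - y) - d * (2 * (x / d - y / d)) := by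
      linear_combination 2 * hx - 2 * hy
    rw [this]
    exact dvd_sub h (dvd_mul_right _ _)
  have h3 : 2 * (x % d - y % d) = 0 := by
    refine Int.eq_zero_of_abs_lt_dvd h2 (abs_lt.mpr ?_)
    constructor <;> by_cases hc : 2 * (x % d) < d
    · have := hxy.mp hc; linarith
    · have := mt hxy.mpr hc; linarith
    · have := hxy.mp hc; linarith
    · have := mt hxy.mpr hc; linarith
  exact Int.ModEq.dvd (show y % d = x % d by linarith)

theorem exists_smul_dotProduct_eq_one {x : Fin 3 → ℤ} (hx : x ≠ 0) :
    ∃ (e : ℕ) (v w : Fin 3 → ℤ), 0 < e ∧ x = (e : ℤ) • v ∧ v ⬝ᵥ w = 1 := by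
  obtain ⟨r, s, t, h⟩ := exists_gcd_gcd_eq (x 0) (x 1) (x 2)
  obtain ⟨⟨a, ha⟩, ⟨b, hb⟩, ⟨c, hc⟩⟩ := gcd_gcd_dvd (x 0) (x 1) (x 2)
  set e := Int.gcd (Int.gcd (x 0) (x 1)) (x 2)
  have he : e ≠ 0 := by
    intro h0
    apply hx
    ext i
    fin_cases i <;> simp [ha, hb, hc, h0]
  refine ⟨e, ![a, b, c], ![r, s, t], Nat.pos_of_ne_zero he, ?_, ?_⟩
  · ext i
    fin_cases i <;> simp [ha, hb, hc]
  · have he' : (e : ℤ) ≠ 0 := by exact_mod_cast he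
    apply mul_left_cancel₀ he'
    simp only [dotProduct, Fin.sum_univ_three]
    simp
    linear_combination -h - r * ha - s * hb - t * hc

/-- Every linearly independent pair is obtained from a primitive pair by a matrix in Hermite
normal form. -/
theorem exists_hermite_primitive (x y : Fin 3 → ℤ)
    (hD : 0 < x ⬝ᵥ x * y ⬝ᵥ y - x ⬝ᵥ y * x ⬝ᵥ y) :
    ∃ (e h f : ℕ) (v : (Fin 3 → ℤ) × (Fin 3 → ℤ)), 0 < e ∧ 0 < h ∧ f < h ∧
      x = (e : ℤ) • v.1 ∧ y = (f : ℤ) • v.1 + (h : ℤ) • v.2 ∧ ∃ w, v.1 ⨯₃ v.2 ⬝ᵥ w = 1 := by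
  have hx : x ≠ 0 := by
    rintro rfl
    simp at hD
  obtain ⟨e, v, w, he, rfl, hvw⟩ := exists_smul_dotProduct_eq_one hx
  have hn : v ⨯₃ y ≠ 0 := by
    intro h0
    have := cross_dot_cross v y v y
    rw [h0] at this
    simp only [smul_dotProduct, dotProduct_smul, smul_eq_mul] at hD
    rw [zero_dotProduct, dotProduct_comm y v] at this
    have h1 : (e : ℤ) ^ 2 * (v ⬝ᵥ v * y ⬝ᵥ y - v ⬝ᵥ y * v ⬝ᵥ y) = 0 := by rw [← this]; ring
    linarith
  obtain ⟨h, n, w', hh, hvy, hnw⟩ := exists_smul_dotProduct_eq_one hn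
  have hh' : (h : ℤ) ≠ 0 := by exact_mod_cast hh.ne'
  have hf0 := Int.emod_nonneg (y ⬝ᵥ w) hh'
  have hf1 := Int.emod_lt_of_pos (y ⬝ᵥ w) (b := (h : ℤ)) (by exact_mod_cast hh)
  have hf2 := Int.emod_add_mul_ediv (y ⬝ᵥ w) h
  have hy : y = (y ⬝ᵥ w) • v + (h : ℤ) • (n ⨯₃ w) := by
    have h1 := cross_cross_eq_smul_sub_smul v y w
    rw [hvy, map_smul, LinearMap.smul_apply, hvw, one_smul] at h1
    rw [h1]
    abel
  have hy' : y = ((y ⬝ᵥ w) % h) • v + (h : ℤ) • (n ⨯₃ w + ((y ⬝ᵥ w) / h) • v) := by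
    conv_lhs => rw [hy, ← hf2]
    module
  refine ⟨e, h, ((y ⬝ᵥ w) % h).toNat, (v, n ⨯₃ w + ((y ⬝ᵥ w) / h) • v), he, hh, by omega, rfl,
    ?_, w', ?_⟩
  · rw [Int.toNat_of_nonneg hf0]
    exact hy'
  · have : v ⨯₃ (n ⨯₃ w + ((y ⬝ᵥ w) / h) • v) = n := by
      apply smul_right_injective _ hh'
      change (h : ℤ) • _ = (h : ℤ) • n
      rw [← hvy, ← map_smul]
      conv_rhs => rw [hy', map_add, map_smul, cross_self, smul_zero, zero_add]
    change v ⨯₃ _ ⬝ᵥ w' = 1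
    rw [this, hnw]

/-- Integral matrices with the same Gram matrix, one of them of determinant one, differ by an
integral orthogonal matrix, whose entries are at most one in absolute value. -/
theorem exists_vecMul_eq_of_gram_eq {V V' : Matrix (Fin 3) (Fin 3) ℤ} (hdet : V.det = 1)
    (hG : V' * V'ᵀ = V * Vᵀ) :
    ∃ A : Matrix (Fin 3) (Fin 3) ℤ, (∀ i j, A i j ∈ Finset.Icc (-1 : ℤ) 1) ∧
      ∀ i, V' i = V i ᵥ* A := by
  have hu : IsUnit V.det := by simp [hdet]
  have hVA : V * (V⁻¹ * V') = V' := by rw [← mul_assoc, mul_nonsing_inv V hu, one_mul]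
  have hA : (V⁻¹ * V') * (V⁻¹ * V')ᵀ = 1 := by
    rw [transpose_mul, mul_assoc, ← mul_assoc V', hG, mul_assoc V, ← transpose_mul,
      nonsing_inv_mul V hu, transpose_one, mul_one, nonsing_inv_mul V hu]
  refine ⟨V⁻¹ * V', fun i j => ?_, fun i => ?_⟩
  · have h := congrFun (congrFun hA i) i
    rw [mul_apply, one_apply_eq] at h
    have hle : (V⁻¹ * V') i j * (V⁻¹ * V') i j ≤ 1 := by
      rw [← h]
      exact Finset.single_le_sum (f := fun k => (V⁻¹ * V') i k * (V⁻¹ * V')ᵀ k i)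
        (fun k _ => mul_self_nonneg _) (Finset.mem_univ j)
    rw [Finset.mem_Icc]
    constructor <;> nlinarith
  · conv_lhs => rw [← hVA]
    rfl

theorem sq_cross_dotProduct (v₁ v₂ w : Fin 3 → ℤ) :
    (v₁ ⨯₃ v₂ ⬝ᵥ w) ^ 2 =
      (v₁ ⬝ᵥ v₁ * v₂ ⬝ᵥ v₂ - v₁ ⬝ᵥ v₂ * v₁ ⬝ᵥ v₂) * w ⬝ᵥ w
        - (v₂ ⬝ᵥ v₂ * (v₁ ⬝ᵥ w) ^ 2 - 2 * v₁ ⬝ᵥ v₂ * v₁ ⬝ᵥ w * v₂ ⬝ᵥ w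
          + v₁ ⬝ᵥ v₁ * (v₂ ⬝ᵥ w) ^ 2) := by
  simp only [cross_apply, dotProduct, Fin.sum_univ_three]
  simp
  ring

theorem exists_vecMul_eq_of_dvd {α β γ : ℤ} (hd : 0 < α * γ - β * β)
    {v₁ v₂ w v₁' v₂' w' : Fin 3 → ℤ}
    (hα : v₁ ⬝ᵥ v₁ = α) (hβ : v₁ ⬝ᵥ v₂ = β) (hγ : v₂ ⬝ᵥ v₂ = γ) (hw : v₁ ⨯₃ v₂ ⬝ᵥ w = 1)
    (hα' : v₁' ⬝ᵥ v₁' = α) (hβ' : v₁' ⬝ᵥ v₂' = β) (hγ' : v₂' ⬝ᵥ v₂' = γ)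
    (hw' : v₁' ⨯₃ v₂' ⬝ᵥ w' = 1)
    (h₁ : α * γ - β * β ∣
      (β * v₂ ⬝ᵥ w - γ * v₁ ⬝ᵥ w) - (β * v₂' ⬝ᵥ w' - γ * v₁' ⬝ᵥ w'))
    (h₂ : α * γ - β * β ∣
      (β * v₁ ⬝ᵥ w - α * v₂ ⬝ᵥ w) - (β * v₁' ⬝ᵥ w' - α * v₂' ⬝ᵥ w')) :
    ∃ A : Matrix (Fin 3) (Fin 3) ℤ, (∀ i j, A i j ∈ Finset.Icc (-1 : ℤ) 1) ∧
      v₁' = v₁ ᵥ* A ∧ v₂' = v₂ ᵥ* A := by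
  obtain ⟨s, hs⟩ := h₁
  obtain ⟨t, ht⟩ := h₂
  have hu : v₁ ⬝ᵥ w = v₁' ⬝ᵥ (w' - s • v₁' - t • v₂') := by
    simp only [dotProduct_sub, dotProduct_smul, smul_eq_mul, hα', hβ']
    apply mul_left_cancel₀ hd.ne'
    linear_combination -α * hs - β * ht
  have hv : v₂ ⬝ᵥ w = v₂' ⬝ᵥ (w' - s • v₁' - t • v₂') := by
    simp only [dotProduct_sub, dotProduct_smul, smul_eq_mul, hγ', dotProduct_comm v₂' v₁', hβ']
    apply mul_left_cancel₀ hd.ne'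
    linear_combination -β * hs - γ * ht
  have hw'' : v₁' ⨯₃ v₂' ⬝ᵥ (w' - s • v₁' - t • v₂') = 1 := by
    rw [dotProduct_sub, dotProduct_sub, dotProduct_smul, dotProduct_smul, hw',
      dotProduct_comm _ v₁', dotProduct_comm _ v₂', dot_self_cross, dot_cross_self]
    simp
  set w'' := w' - s • v₁' - t • v₂'
  have hQ : w'' ⬝ᵥ w'' = w ⬝ᵥ w := by
    have e := sq_cross_dotProduct v₁ v₂ w
    have e' := sq_cross_dotProduct v₁' v₂' w''
    rw [hα, hβ, hγ, hw, hu, hv] at e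
    rw [hα', hβ', hγ', hw''] at e'
    apply mul_left_cancel₀ hd.ne'
    linear_combination e - e'
  have hdet : Matrix.det ![v₁, v₂, w] = 1 := by
    rw [← triple_product_eq_det, triple_product_permutation, triple_product_permutation,
      dotProduct_comm, hw]
  obtain ⟨A, hA, hrow⟩ := exists_vecMul_eq_of_gram_eq (V := ![v₁, v₂, w]) (V' := ![v₁', v₂', w''])
    hdet (by
      ext i j
      change ![v₁', v₂', w''] i ⬝ᵥ ![v₁', v₂', w''] j = ![v₁, v₂, w] i ⬝ᵥ ![v₁, v₂, w] j
      fin_cases i <;> fin_cases j <;>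
        simp [hα, hα', hβ, hβ', hγ, hγ', hQ, hu, hv, dotProduct_comm v₂ v₁,
          dotProduct_comm v₂' v₁', dotProduct_comm w, dotProduct_comm w''])
  exact ⟨A, hA, hrow 0, hrow 1⟩

/-- The number of primitive representations of a positive binary form of determinant `d` by a sum
of three squares is at most a constant times the square of the number of divisors of `d`. -/
theorem card_primitive_le {α β γ : ℤ} (hd : 0 < α * γ - β * β)
    (s : Finset ((Fin 3 → ℤ) × (Fin 3 → ℤ)))
    (hs : ∀ p ∈ s, p.1 ⬝ᵥ p.1 = α ∧ p.1 ⬝ᵥ p.2 = β ∧ p.2 ⬝ᵥ p.2 = γ ∧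
      ∃ w, p.1 ⨯₃ p.2 ⬝ᵥ w = 1) :
    s.card ≤ 3 ^ 9 * ((α * γ - β * β).natAbs.divisors.card ^ 2 * 4) := by
  classical
  rcases s.eq_empty_or_nonempty with rfl | ⟨p₀, hp₀⟩
  · simp
  set d := α * γ - β * β with hd_def
  have hex : ∀ p : (Fin 3 → ℤ) × (Fin 3 → ℤ), ∃ w, p ∈ s → p.1 ⨯₃ p.2 ⬝ᵥ w = 1 := fun p => by
    by_cases hp : p ∈ s
    · exact (hs p hp).2.2.2.imp fun w hw _ => hw
    · exact ⟨0, fun h => absurd h hp⟩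
  choose W hW using hex
  set σ : (Fin 3 → ℤ) × (Fin 3 → ℤ) → ℤ := fun p => β * p.2 ⬝ᵥ W p - γ * p.1 ⬝ᵥ W p with hσ
  set τ : (Fin 3 → ℤ) × (Fin 3 → ℤ) → ℤ := fun p => β * p.1 ⬝ᵥ W p - α * p.2 ⬝ᵥ W p with hτ
  have hsq : ∀ p ∈ s, d * W p ⬝ᵥ W p = 1 + γ * (p.1 ⬝ᵥ W p) ^ 2
      - 2 * β * p.1 ⬝ᵥ W p * p.2 ⬝ᵥ W p + α * (p.2 ⬝ᵥ W p) ^ 2 := fun p hp => by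
    have e := sq_cross_dotProduct p.1 p.2 (W p)
    obtain ⟨h1, h2, h3, -⟩ := hs p hp
    rw [h1, h2, h3, hW p hp] at e
    linear_combination -e
  have hσσ : ∀ p ∈ s, d ∣ σ p * σ p + γ := fun p hp =>
    ⟨γ * W p ⬝ᵥ W p - (p.2 ⬝ᵥ W p) ^ 2, by
      linear_combination -γ * hsq p hp⟩
  have hστ : ∀ p ∈ s, d ∣ σ p * τ p - β := fun p hp =>
    ⟨p.1 ⬝ᵥ W p * p.2 ⬝ᵥ W p - β * W p ⬝ᵥ W p, by
      linear_combination β * hsq p hp⟩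
  have hττ : ∀ p ∈ s, d ∣ τ p * τ p + α := fun p hp =>
    ⟨α * W p ⬝ᵥ W p - (p.1 ⬝ᵥ W p) ^ 2, by
      linear_combination -α * hsq p hp⟩
  have hunit : ∃ u v k : ℤ, u * σ p₀ + v * τ p₀ + k * d = 1 :=
    ⟨p₀.1 ⬝ᵥ W p₀, p₀.2 ⬝ᵥ W p₀, W p₀ ⬝ᵥ W p₀, by linear_combination hsq p₀ hp₀⟩
  set key : (Fin 3 → ℤ) × (Fin 3 → ℤ) → (ℕ × ℕ) × (Bool × Bool) := fun p =>
    ((Int.gcd (Int.gcd d (σ p - σ p₀)) (τ p - τ p₀),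
      Int.gcd (Int.gcd d (σ p + σ p₀)) (τ p + τ p₀)),
      (decide (2 * (σ p % d) < d), decide (2 * (τ p % d) < d))) with hkey
  have himage : (s.image key).card ≤ d.natAbs.divisors.card ^ 2 * 4 := by
    calc (s.image key).card
        ≤ ((d.natAbs.divisors ×ˢ d.natAbs.divisors) ×ˢ
            (Finset.univ : Finset (Bool × Bool))).card := by
          refine Finset.card_le_card fun k hk => ?_
          obtain ⟨p, -, rfl⟩ := Finset.mem_image.mp hk
          simp only [hkey, Finset.mem_product, Nat.mem_divisors, Finset.mem_univ, and_true]
          have hd0 : d.natAbs ≠ 0 := by omega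
          exact ⟨⟨Int.natCast_dvd.mp (gcd_gcd_dvd _ _ _).1, hd0⟩,
            ⟨Int.natCast_dvd.mp (gcd_gcd_dvd _ _ _).1, hd0⟩⟩
      _ = d.natAbs.divisors.card ^ 2 * 4 := by
          simp [Finset.card_product, sq]
  refine (Finset.card_le_mul_card_image s (3 ^ 9) fun k hk => ?_).trans
    (Nat.mul_le_mul_left _ himage)
  obtain ⟨p₁, hp₁, rfl⟩ := Finset.mem_image.mp hk
  set T : Finset (Fin 3 → Fin 3 → ℤ) :=
    Fintype.piFinset fun _ => Fintype.piFinset fun _ => Finset.Icc (-1 : ℤ) 1 with hT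
  have hTmem : ∀ A : Fin 3 → Fin 3 → ℤ, (∀ i j, A i j ∈ Finset.Icc (-1 : ℤ) 1) → A ∈ T := by
    intro A hA
    rw [hT, Fintype.mem_piFinset]
    exact fun i => Fintype.mem_piFinset.mpr (hA i)
  have hTcard : T.card = 3 ^ 9 := by simp [hT]
  rw [← hTcard]
  refine (Finset.card_le_card (t := T.image fun A =>
    (p₁.1 ᵥ* (A : Matrix (Fin 3) (Fin 3) ℤ), p₁.2 ᵥ* (A : Matrix (Fin 3) (Fin 3) ℤ))) ?_).trans
    Finset.card_image_le
  intro p hp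
  obtain ⟨hps, hpk⟩ := Finset.mem_filter.mp hp
  simp only [hkey, Prod.mk.injEq, decide_eq_decide] at hpk
  obtain ⟨⟨g₁, g₂⟩, b₁, b₂⟩ := hpk
  have k₁₁ : d ∣ σ p₀ * σ p₀ - σ p * σ p := by
    simpa using dvd_sub (hσσ p₀ hp₀) (hσσ p hps)
  have k₁₂ : d ∣ σ p₀ * τ p₀ - σ p * τ p := by
    simpa using dvd_sub (hστ p₀ hp₀) (hστ p hps)
  have k₂₂ : d ∣ τ p₀ * τ p₀ - τ p * τ p := by
    simpa using dvd_sub (hττ p₀ hp₀) (hττ p hps)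
  obtain ⟨-, m₁, m₂⟩ := gcd_gcd_dvd d (σ p - σ p₀) (τ p - τ p₀)
  obtain ⟨-, n₁, n₂⟩ := gcd_gcd_dvd d (σ p + σ p₀) (τ p + τ p₀)
  obtain ⟨-, m₁', m₂'⟩ := gcd_gcd_dvd d (σ p₁ - σ p₀) (τ p₁ - τ p₀)
  obtain ⟨-, n₁', n₂'⟩ := gcd_gcd_dvd d (σ p₁ + σ p₀) (τ p₁ + τ p₀)
  rw [← g₁] at m₁' m₂'
  rw [← g₂] at n₁' n₂'
  have hdσ : d ∣ σ p₁ - σ p := dvd_sub_of_dvd_two_mul hd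
    (dvd_two_mul_of_gcd_dvd hunit k₁₁ k₁₂ k₂₂ (by simpa using dvd_sub m₁' m₁)
      (by simpa using dvd_sub n₁' n₁)) b₁.symm
  have hdτ : d ∣ τ p₁ - τ p := dvd_sub_of_dvd_two_mul hd
    (dvd_two_mul_of_gcd_dvd hunit k₁₁ k₁₂ k₂₂ (by simpa using dvd_sub m₂' m₂)
      (by simpa using dvd_sub n₂' n₂)) b₂.symm
  obtain ⟨a₁, a₂, a₃, -⟩ := hs p₁ hp₁
  obtain ⟨c₁, c₂, c₃, -⟩ := hs p hps
  obtain ⟨A, hA, e₁, e₂⟩ := exists_vecMul_eq_of_dvd hd a₁ a₂ a₃ (hW p₁ hp₁) c₁ c₂ c₃ (hW p hps)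
    hdσ hdτ
  refine Finset.mem_image.mpr ⟨A, hTmem A hA, Prod.ext e₁.symm e₂.symm⟩

/-- The number of residues `f` modulo `h` for which the form with coefficients `a, b, c` descends
to the overlattice with Hermite normal form `(e, f, h)` is at most `gcd(a, b, c)`. -/
theorem card_hermite_offsets_le {a b c : ℤ} (hg : Int.gcd (Int.gcd a b) c ≠ 0) {e h : ℕ}
    (he : 0 < e) (hh : 0 < h) (s : Finset ℕ)
    (hs : ∀ f ∈ s, f < h ∧ ∃ α β γ : ℤ, a = e ^ 2 * α ∧ b = e * (f * α + h * β) ∧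
      c = f ^ 2 * α + 2 * f * h * β + h ^ 2 * γ) :
    s.card ≤ Int.gcd (Int.gcd a b) c := by
  rcases s.eq_empty_or_nonempty with rfl | ⟨f₀, hf₀⟩
  · simp
  have he' : (e : ℤ) ≠ 0 := by exact_mod_cast he.ne'
  have hh' : (h : ℤ) ≠ 0 := by exact_mod_cast hh.ne'
  obtain ⟨-, α, β₀, γ₀, ha, hb, hc⟩ := hs f₀ hf₀
  set B : ℤ := f₀ * α + h * β₀ with hB
  set r : ℕ := Int.gcd (Int.gcd α B) h with hr
  obtain ⟨x, y, z, hxyz⟩ := exists_gcd_gcd_eq α B h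
  obtain ⟨r₁, r₂, r₃⟩ := gcd_gcd_dvd α B h
  rw [← hr] at hxyz r₁ r₂ r₃
  have hrg : (r : ℤ) ∣ Int.gcd (Int.gcd a b) c := by
    refine Int.dvd_coe_gcd (Int.dvd_coe_gcd ?_ ?_) ?_
    · rw [ha]; exact r₁.mul_left _
    · rw [hb]; exact r₂.mul_left _
    · have : c = f₀ * B + h * (f₀ * β₀ + h * γ₀) := by rw [hc, hB]; ring
      rw [this]
      exact dvd_add (r₂.mul_left _) (r₃.mul_right _)
  refine le_trans ?_ (Nat.le_of_dvd (Nat.pos_of_ne_zero hg) (Int.natCast_dvd_natCast.mp hrg))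
  obtain ⟨m, hm⟩ := Int.natCast_dvd_natCast.mp r₃
  have hr0 : 0 < r := Nat.pos_of_ne_zero fun h0 => by simp [h0] at hm; omega
  have hm0 : 0 < m := Nat.pos_of_ne_zero fun h0 => by simp [h0] at hm; omega
  have hmod : ∀ f ∈ s, (f : ℤ) ≡ f₀ [ZMOD m] := by
    intro f hf
    obtain ⟨-, α', β, γ, ha', hb', hc'⟩ := hs f hf
    obtain rfl : α' = α := mul_left_cancel₀ (pow_ne_zero 2 he') (ha'.symm.trans ha)
    have hB' : B = f * α' + h * β := mul_left_cancel₀ he' (hb.symm.trans hb')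
    refine (Int.modEq_iff_dvd.mpr ?_).symm
    have hr' : (r : ℤ) ≠ 0 := by exact_mod_cast hr0.ne'
    have hm' : (h : ℤ) = r * m := by exact_mod_cast hm
    refine ⟨x * (β₀ - β) + y * (f₀ * β₀ + h * γ₀ - f * β - h * γ) + z * (f - f₀), ?_⟩
    apply mul_left_cancel₀ hr'
    rw [← mul_assoc, ← hm']
    have e1 : ((f : ℤ) - f₀) * α' = h * (β₀ - β) := by linear_combination hB - hB'
    have e2 : ((f : ℤ) - f₀) * B = h * (f₀ * β₀ + h * γ₀ - f * β - h * γ) := by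
      linear_combination hc - hc' + f * hB' - f₀ * hB
    linear_combination ((f : ℤ) - f₀) * hxyz + x * e1 + y * e2
  calc s.card = (s.image (· / m)).card := by
        refine (Finset.card_image_of_injOn fun f hf f' hf' hff => ?_).symm
        have h1 : f % m = f' % m :=
          Int.natCast_modEq_iff.mp ((hmod f hf).trans (hmod f' hf').symm)
        have hff' : f / m = f' / m := hff
        rw [← Nat.div_add_mod f m, ← Nat.div_add_mod f' m, h1, hff']
    _ ≤ (Finset.range r).card := by
        refine Finset.card_le_card fun k hk => ?_
        obtain ⟨f, hf, rfl⟩ := Finset.mem_image.mp hk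
        rw [Finset.mem_range, Nat.div_lt_iff_lt_mul hm0, ← hm]
        exact (hs f hf).1
    _ = r := Finset.card_range r

/-- The number of representations of a positive binary form by a sum of three squares is at most
a constant times its content times the fourth power of the number of divisors of its
determinant. -/
theorem card_gram_le {a b c : ℤ} (ha : 0 < a) (hD : 0 < a * c - b * b)
    (s : Finset ((Fin 3 → ℤ) × (Fin 3 → ℤ)))
    (hs : ∀ p ∈ s, p.1 ⬝ᵥ p.1 = a ∧ p.1 ⬝ᵥ p.2 = b ∧ p.2 ⬝ᵥ p.2 = c) :
    s.card ≤ 3 ^ 9 * 4 * Int.gcd (Int.gcd a b) c * (a * c - b * b).natAbs.divisors.card ^ 4 := by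
  classical
  set D := a * c - b * b with hD_def
  have hD0 : D.natAbs ≠ 0 := by omega
  have hg : Int.gcd (Int.gcd a b) c ≠ 0 := by
    intro h0
    have := Int.gcd_eq_zero_iff.mp h0
    have := Int.gcd_eq_zero_iff.mp (by exact_mod_cast this.1 : Int.gcd a b = 0)
    omega
  have hex : ∀ p : (Fin 3 → ℤ) × (Fin 3 → ℤ),
      ∃ (e h f : ℕ) (v : (Fin 3 → ℤ) × (Fin 3 → ℤ)), p ∈ s → 0 < e ∧ 0 < h ∧ f < h ∧
      p.1 = (e : ℤ) • v.1 ∧ p.2 = (f : ℤ) • v.1 + (h : ℤ) • v.2 ∧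
      ∃ w, v.1 ⨯₃ v.2 ⬝ᵥ w = 1 := by
    intro p
    by_cases hp : p ∈ s
    · obtain ⟨h1, h2, h3⟩ := hs p hp
      obtain ⟨e, h, f, v, H⟩ := exists_hermite_primitive p.1 p.2 (by rw [h1, h2, h3]; exact hD)
      exact ⟨e, h, f, v, fun _ => H⟩
    · exact ⟨0, 0, 0, 0, fun h => absurd h hp⟩
  choose e h f v H using hex
  have hgram : ∀ p ∈ s, a = (e p : ℤ) ^ 2 * (v p).1 ⬝ᵥ (v p).1 ∧
      b = e p * (f p * (v p).1 ⬝ᵥ (v p).1 + h p * (v p).1 ⬝ᵥ (v p).2) ∧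
      c = (f p : ℤ) ^ 2 * (v p).1 ⬝ᵥ (v p).1 + 2 * f p * h p * (v p).1 ⬝ᵥ (v p).2
        + (h p : ℤ) ^ 2 * (v p).2 ⬝ᵥ (v p).2 := by
    intro p hp
    obtain ⟨h1, h2, h3⟩ := hs p hp
    obtain ⟨-, -, -, hx, hy, -⟩ := H p hp
    rw [← h1, ← h2, ← h3, hy, hx]
    simp only [dotProduct_add, add_dotProduct, dotProduct_smul, smul_dotProduct, smul_eq_mul,
      dotProduct_comm (v p).2 (v p).1]
    refine ⟨by ring, by ring, by ring⟩
  have hdet : ∀ p ∈ s, D = ((e p : ℤ) * h p) ^ 2 * ((v p).1 ⬝ᵥ (v p).1 * (v p).2 ⬝ᵥ (v p).2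
      - (v p).1 ⬝ᵥ (v p).2 * (v p).1 ⬝ᵥ (v p).2) := by
    intro p hp
    obtain ⟨h1, h2, h3⟩ := hgram p hp
    rw [hD_def, h1, h2, h3]
    ring
  set N := D.natAbs.divisors.card with hN
  have himage : (s.image fun p => (e p, h p)).card ≤ N ^ 2 := by
    rw [sq, hN, ← Finset.card_product]
    refine Finset.card_le_card fun k hk => ?_
    obtain ⟨p, hp, rfl⟩ := Finset.mem_image.mp hk
    rw [Finset.mem_product, Nat.mem_divisors, Nat.mem_divisors]
    refine ⟨⟨Int.natCast_dvd.mp ?_, hD0⟩, ⟨Int.natCast_dvd.mp ?_, hD0⟩⟩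
    · rw [hdet p hp, mul_pow, sq (e p : ℤ), mul_assoc, mul_assoc]; exact dvd_mul_right _ _
    · rw [hdet p hp, mul_pow, mul_comm (_ ^ 2) (_ ^ 2), sq (h p : ℤ), mul_assoc, mul_assoc]
      exact dvd_mul_right _ _
  have hfib : ∀ k ∈ s.image fun p => (e p, h p), (s.filter fun p => (e p, h p) = k).card ≤
      3 ^ 9 * (N ^ 2 * 4) * Int.gcd (Int.gcd a b) c := by
    intro k hk
    obtain ⟨p₀, hp₀, rfl⟩ := Finset.mem_image.mp hk
    obtain ⟨he, hh, -⟩ := H p₀ hp₀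
    have hle : ((s.filter fun p => (e p, h p) = (e p₀, h p₀)).image f).card ≤
        Int.gcd (Int.gcd a b) c := by
      refine card_hermite_offsets_le hg he hh _ fun k hk => ?_
      obtain ⟨p, hp, rfl⟩ := Finset.mem_image.mp hk
      obtain ⟨hps, hpk⟩ := Finset.mem_filter.mp hp
      obtain ⟨ee, eh⟩ := Prod.mk.injEq .. ▸ hpk
      rw [← ee, ← eh]
      exact ⟨(H p hps).2.2.1, _, _, _, hgram p hps⟩
    refine (Finset.card_le_mul_card_image (f := f) _ (3 ^ 9 * (N ^ 2 * 4)) fun k hk => ?_).trans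
      (Nat.mul_le_mul_left _ hle)
    obtain ⟨p₁, hp₁, rfl⟩ := Finset.mem_image.mp hk
    obtain ⟨hp₁s, hp₁k⟩ := Finset.mem_filter.mp hp₁
    obtain ⟨e₁, h₁⟩ := Prod.mk.injEq .. ▸ hp₁k
    have he' : (e p₁ : ℤ) ≠ 0 := by exact_mod_cast (H p₁ hp₁s).1.ne'
    have hh' : (h p₁ : ℤ) ≠ 0 := by exact_mod_cast (H p₁ hp₁s).2.1.ne'
    set t := (s.filter fun p => (e p, h p) = (e p₀, h p₀)).filter fun p => f p = f p₁ with ht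
    have hmem : ∀ p ∈ t, p ∈ s ∧ e p = e p₁ ∧ h p = h p₁ ∧ f p = f p₁ := by
      intro p hp
      obtain ⟨hp', hf⟩ := Finset.mem_filter.mp hp
      obtain ⟨hps, hpk⟩ := Finset.mem_filter.mp hp'
      obtain ⟨ee, eh⟩ := Prod.mk.injEq .. ▸ hpk
      exact ⟨hps, ee.trans e₁.symm, eh.trans h₁.symm, hf⟩
    have hinj : Set.InjOn v t := by
      intro p hp p' hp' hv
      obtain ⟨hps, ee, eh, ef⟩ := hmem p hp
      obtain ⟨hps', ee', eh', ef'⟩ := hmem p' hp'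
      obtain ⟨-, -, -, hx, hy, -⟩ := H p hps
      obtain ⟨-, -, -, hx', hy', -⟩ := H p' hps'
      refine Prod.ext ?_ ?_
      · rw [hx, hx', ee, ee', hv]
      · rw [hy, hy', eh, eh', ef, ef', hv]
    have hdet₁ := hdet p₁ hp₁s
    have hpos : 0 < (v p₁).1 ⬝ᵥ (v p₁).1 * (v p₁).2 ⬝ᵥ (v p₁).2
        - (v p₁).1 ⬝ᵥ (v p₁).2 * (v p₁).1 ⬝ᵥ (v p₁).2 := by
      have hsq : 0 < ((e p₁ : ℤ) * h p₁) ^ 2 := by positivity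
      exact pos_of_mul_pos_right (hdet₁ ▸ hD) hsq.le
    rw [← Finset.card_image_of_injOn hinj]
    refine (card_primitive_le hpos (t.image v) fun k hk => ?_).trans ?_
    · obtain ⟨p, hp, rfl⟩ := Finset.mem_image.mp hk
      obtain ⟨hps, ee, eh, ef⟩ := hmem p hp
      obtain ⟨g₁, g₂, g₃⟩ := hgram p hps
      obtain ⟨g₁', g₂', g₃'⟩ := hgram p₁ hp₁s
      rw [ee, ef, eh] at *
      have hα := mul_left_cancel₀ (pow_ne_zero 2 he') (g₁.symm.trans g₁')
      have hβ := mul_left_cancel₀ he' (g₂.symm.trans g₂')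
      rw [hα] at hβ
      have hβ' := mul_left_cancel₀ hh' (add_left_cancel hβ)
      have hγ := g₃.symm.trans g₃'
      rw [hα, hβ'] at hγ
      exact ⟨hα, hβ', mul_left_cancel₀ (pow_ne_zero 2 hh') (add_left_cancel hγ),
        (H p hps).2.2.2.2.2⟩
    · have hdvd : ((v p₁).1 ⬝ᵥ (v p₁).1 * (v p₁).2 ⬝ᵥ (v p₁).2
          - (v p₁).1 ⬝ᵥ (v p₁).2 * (v p₁).1 ⬝ᵥ (v p₁).2).natAbs ∣ D.natAbs :=
        Int.natAbs_dvd_natAbs.mpr (hdet₁ ▸ dvd_mul_left _ _)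
      have := Finset.card_le_card (Nat.divisors_subset_of_dvd hD0 hdvd)
      gcongr
  calc s.card ≤ 3 ^ 9 * (N ^ 2 * 4) * Int.gcd (Int.gcd a b) c
        * (s.image fun p => (e p, h p)).card := Finset.card_le_mul_card_image s _ hfib
    _ ≤ 3 ^ 9 * (N ^ 2 * 4) * Int.gcd (Int.gcd a b) c * N ^ 2 := by gcongr
    _ = 3 ^ 9 * 4 * Int.gcd (Int.gcd a b) c * N ^ 4 := by ring

theorem Matrix.PosDef.sub_mul_pos_of_int {A : Matrix (Fin 2) (Fin 2) ℤ} (hA : A.PosDef) :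
    0 < A 0 0 * A 1 1 - A 0 1 * A 0 1 := by
  have h00 := hA.diag_pos (i := 0)
  have hsym : A 1 0 = A 0 1 := by simpa using (hA.isHermitian.apply 0 1)
  have hx : ![-A 0 1, A 0 0] ≠ 0 := fun h => h00.ne' (by simpa using congrFun h 1)
  have h := hA.dotProduct_mulVec_pos hx
  simp [Matrix.mulVec, dotProduct, Fin.sum_univ_two, hsym] at h
  have h2 : 0 < A 0 0 * (A 0 0 * A 1 1 - A 0 1 * A 0 1) := by linarith
  exact pos_of_mul_pos_right h2 h00.le

/-- For every `ε > 0` there is `C > 0` such that for every integer `q > 1` and every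
positive definite `Λ' ∈ M₂,₂(ℤ)` with all entries of absolute value at most `3q²`,
the number of pairs `(x,y) ∈ (ℤ³)²` with `⟨x,x⟩ = Λ'₁₁`, `⟨x,y⟩ = Λ'₁₂`,
`⟨y,y⟩ = Λ'₂₂` is at most `C · q^ε · gcd(Λ'₁₁, Λ'₁₂, Λ'₂₂)`. -/
theorem pairs_le_gcd :
    ∀ ε : ℝ, 0 < ε → ∃ C : ℝ, 0 < C ∧ ∀ q : ℕ, 1 < q →
      ∀ Λ' : Matrix (Fin 2) (Fin 2) ℤ, Λ'.PosDef →
        (∀ i j, |Λ' i j| ≤ 3 * (q : ℤ) ^ 2) →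
        (Nat.card {xy : (Fin 3 → ℤ) × (Fin 3 → ℤ) //
            xy.1 ⬝ᵥ xy.1 = Λ' 0 0 ∧ xy.1 ⬝ᵥ xy.2 = Λ' 0 1 ∧ xy.2 ⬝ᵥ xy.2 = Λ' 1 1} : ℝ) ≤
          C * (q : ℝ) ^ ε * (Int.gcd (Int.gcd (Λ' 0 0) (Λ' 0 1)) (Λ' 1 1) : ℝ) := by
  intro ε hε
  obtain ⟨C, hC, hdiv⟩ := exists_card_divisors_le_rpow (ε / 32) (by positivity)
  refine ⟨3 ^ 9 * 4 * C ^ 4, by positivity, fun q hq A hA hbound => ?_⟩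
  have hD := hA.sub_mul_pos_of_int
  set D := A 0 0 * A 1 1 - A 0 1 * A 0 1 with hD_def
  have hcard : Nat.card {xy : (Fin 3 → ℤ) × (Fin 3 → ℤ) //
      xy.1 ⬝ᵥ xy.1 = A 0 0 ∧ xy.1 ⬝ᵥ xy.2 = A 0 1 ∧ xy.2 ⬝ᵥ xy.2 = A 1 1} ≤
      3 ^ 9 * 4 * Int.gcd (Int.gcd (A 0 0) (A 0 1)) (A 1 1) * D.natAbs.divisors.card ^ 4 := by
    rw [← Set.coe_ofPred, Nat.card_coe_set_eq]
    set S := {xy : (Fin 3 → ℤ) × (Fin 3 → ℤ) |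
      xy.1 ⬝ᵥ xy.1 = A 0 0 ∧ xy.1 ⬝ᵥ xy.2 = A 0 1 ∧ xy.2 ⬝ᵥ xy.2 = A 1 1}
    rcases S.finite_or_infinite with hS | hS
    · rw [Set.ncard_eq_toFinset_card S hS]
      exact card_gram_le hA.diag_pos hD _ fun p hp => hS.mem_toFinset.mp hp
    · rw [hS.ncard]
      exact Nat.zero_le _
  have hDq : D.natAbs ≤ q ^ 8 := by
    have h0 := abs_le.mp (hbound 0 0)
    have h1 := abs_le.mp (hbound 1 1)
    have h2 : (2 : ℤ) ≤ q := by exact_mod_cast hq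
    have h3 : D ≤ 3 * (q : ℤ) ^ 2 * (3 * (q : ℤ) ^ 2) := by
      have := mul_le_mul h0.2 h1.2 hA.diag_pos.le (by positivity)
      nlinarith [mul_self_nonneg (A 0 1)]
    have h4 : (16 : ℤ) ≤ (q : ℤ) ^ 4 := by
      calc (16 : ℤ) = 2 ^ 4 := by norm_num
        _ ≤ (q : ℤ) ^ 4 := by gcongr
    have h5 : D ≤ (q : ℤ) ^ 8 := by
      nlinarith [mul_le_mul_of_nonneg_right h4 (by positivity : (0 : ℤ) ≤ (q : ℤ) ^ 4)]
    zify
    rwa [abs_of_pos hD]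
  have hN : (D.natAbs.divisors.card : ℝ) ^ 4 ≤ C ^ 4 * (q : ℝ) ^ ε := by
    have hq0 : (0 : ℝ) ≤ q := Nat.cast_nonneg q
    calc (D.natAbs.divisors.card : ℝ) ^ 4 ≤ (C * (D.natAbs : ℝ) ^ (ε / 32)) ^ 4 := by
          gcongr
          exact hdiv _ (by omega)
      _ ≤ (C * ((q : ℝ) ^ 8) ^ (ε / 32)) ^ 4 := by
          gcongr
          exact_mod_cast hDq
      _ = C ^ 4 * (q : ℝ) ^ ε := by
          rw [mul_pow, ← Real.rpow_natCast (q : ℝ) 8, ← Real.rpow_mul hq0, ← Real.rpow_natCast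
            ((q : ℝ) ^ _) 4, ← Real.rpow_mul hq0]
          congr 2
          push_cast
          ring
  calc _ ≤ ((3 ^ 9 * 4 * Int.gcd (Int.gcd (A 0 0) (A 0 1)) (A 1 1)
        * D.natAbs.divisors.card ^ 4 : ℕ) : ℝ) := by exact_mod_cast hcard
    _ = 3 ^ 9 * 4 * (Int.gcd (Int.gcd (A 0 0) (A 0 1)) (A 1 1) : ℝ)
        * (D.natAbs.divisors.card : ℝ) ^ 4 := by push_cast; ring
    _ ≤ 3 ^ 9 * 4 * (Int.gcd (Int.gcd (A 0 0) (A 0 1)) (A 1 1) : ℝ)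
        * (C ^ 4 * (q : ℝ) ^ ε) := by gcongr
    _ = _ := by ring
end

section
/- For every ε > 0 there exists a constant C > 0 such that for every integer q > 1, every nonzero x ∈ ℤ³, and all integers a, b with 0 ≤ a, b ≤ 4q², the number of points z ∈ ℤ³ satisfying ⟨z,z⟩ = a and ⟨z−x, z−x⟩ = b is at most C · q^{ε}. -/
open Matrix

theorem exists_card_divisors_le_mul_rpow {ε : ℝ} (hε : 0 < ε) :
    ∃ C : ℝ, 1 ≤ C ∧ ∀ n : ℕ, n ≠ 0 → (n.divisors.card : ℝ) ≤ C * (n : ℝ) ^ ε := by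
  obtain ⟨P, hP⟩ := exists_nat_ge ((2 : ℝ) ^ (1 / ε))
  have ht : 0 < ε * Real.log 2 := mul_pos hε (Real.log_pos one_lt_two)
  set t := ε * Real.log 2 with ht_def
  have hK : 1 ≤ 1 + 1 / t := by have := one_div_pos.2 ht; linarith
  set K := 1 + 1 / t with hK_def
  refine ⟨K ^ P, one_le_pow₀ hK, fun n hn => ?_⟩
  have local_bound : ∀ p ∈ n.primeFactors, ((n.factorization p + 1 : ℕ) : ℝ) ≤
      (if p < P then K else 1) * ((p : ℝ) ^ ε) ^ n.factorization p := by
    intro p hp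
    have hp2 : (2 : ℝ) ≤ p := by exact_mod_cast (Nat.prime_of_mem_primeFactors hp).two_le
    generalize n.factorization p = k
    split_ifs with h
    · have h1 : (k : ℝ) * t + 1 ≤ ((p : ℝ) ^ ε) ^ k := calc
        (k : ℝ) * t + 1 ≤ Real.exp (k * t) := Real.add_one_le_exp _
        _ = ((2 : ℝ) ^ ε) ^ k := by
          rw [Real.rpow_def_of_pos two_pos, ← Real.exp_nat_mul, ht_def, mul_comm ε]
        _ ≤ ((p : ℝ) ^ ε) ^ k := by gcongr
      calc ((k + 1 : ℕ) : ℝ) ≤ K * (k * t + 1) := by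
            have h2 : K * (k * t + 1) = k * t + 1 + k + 1 / t := by
              rw [hK_def]; field_simp; ring
            have h3 := one_div_pos.2 ht
            have h4 : 0 ≤ (k : ℝ) * t := by positivity
            push_cast; linarith
        _ ≤ _ := by gcongr
    · have h1 : (2 : ℝ) ≤ (p : ℝ) ^ ε := calc
        (2 : ℝ) = ((2 : ℝ) ^ (1 / ε)) ^ ε := by
          rw [← Real.rpow_mul two_pos.le, one_div_mul_cancel hε.ne', Real.rpow_one]
        _ ≤ (p : ℝ) ^ ε := by
          gcongr
          exact hP.trans (by exact_mod_cast not_lt.1 h)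
      rw [one_mul]
      calc ((k + 1 : ℕ) : ℝ) ≤ (2 : ℝ) ^ k := by exact_mod_cast Nat.lt_two_pow_self
        _ ≤ _ := by gcongr
  have hn_prod : (n : ℝ) ^ ε = ∏ p ∈ n.primeFactors, ((p : ℝ) ^ ε) ^ n.factorization p := by
    conv_lhs => rw [← Nat.prod_factorization_pow_eq_self hn]
    rw [Finsupp.prod, Nat.support_factorization]
    push_cast
    rw [← Real.finsetProd_rpow _ _ fun _ _ => by positivity]
    refine Finset.prod_congr rfl fun p _ => ?_
    rw [← Real.rpow_natCast, ← Real.rpow_natCast, ← Real.rpow_mul (by positivity),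
      ← Real.rpow_mul (by positivity), mul_comm]
  have hconst : ∏ p ∈ n.primeFactors, (if p < P then K else 1) ≤ K ^ P := by
    rw [Finset.prod_ite, Finset.prod_const, Finset.prod_const_one, mul_one]
    refine pow_le_pow_right₀ hK ?_
    calc _ ≤ (Finset.range P).card := Finset.card_le_card fun p hp => by
            simpa using (Finset.mem_filter.1 hp).2
      _ = P := Finset.card_range P
  rw [Nat.card_divisors hn, Nat.cast_prod, hn_prod]
  calc _ ≤ _ := Finset.prod_le_prod (fun _ _ => by positivity) local_bound
    _ ≤ _ := by
      rw [Finset.prod_mul_distrib]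
      gcongr

/-- The representations of `N` by the binary form `u² + D v²`. -/
noncomputable def sqAddMulSqReps (D : ℤ) (N : ℕ) : Finset (ℤ × ℤ) :=
  {p ∈ Finset.Icc (-(N : ℤ)) N ×ˢ Finset.Icc (-(N : ℤ)) N | p.1 ^ 2 + D * p.2 ^ 2 = N}

theorem mem_sqAddMulSqReps {D : ℤ} (hD : 0 < D) {N : ℕ} {p : ℤ × ℤ} :
    p ∈ sqAddMulSqReps D N ↔ p.1 ^ 2 + D * p.2 ^ 2 = N := by
  simp only [sqAddMulSqReps, Finset.mem_filter, Finset.mem_product, Finset.mem_Icc,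
    and_iff_right_iff_imp]
  intro h
  have key : ∀ w : ℤ, w ^ 2 ≤ N → -(N : ℤ) ≤ w ∧ w ≤ N := fun w hw =>
    abs_le.1 (by nlinarith [sq_abs w, abs_nonneg w, Int.le_self_sq |w|])
  exact ⟨key _ (by nlinarith [sq_nonneg p.2]), key _ (by nlinarith [sq_nonneg p.1, sq_nonneg p.2])⟩

theorem dvd_two_of_sq_dvd_four_mul {D h : ℤ} (hD : Squarefree D) (hh : h ^ 2 ∣ 4 * D) :
    h ∣ 2 := by
  rcases Int.even_or_odd' h with ⟨m, rfl | rfl⟩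
  · have : m * m ∣ D := by
      refine Int.dvd_of_mul_dvd_mul_left (a := 4) (by norm_num) ?_
      convert hh using 1; ring
    simpa using mul_dvd_mul_left 2 ((hD m this).dvd : m ∣ 1)
  · have hc : IsCoprime (2 * m + 1) 2 := ⟨1, -m, by ring⟩
    have h4 : IsCoprime ((2 * m + 1) ^ 2) 4 := by
      have := hc.pow (m := 2) (n := 2); norm_num at this; exact this
    have := h4.dvd_of_dvd_mul_left hh
    exact (hD _ (by rwa [← sq])).dvd

/-- Two primitive representations with the same divisor relative to `(u₀, v₀)` have a
cross product divisible by `N`, up to a factor of two. -/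
theorem dvd_two_mul_cross {D N g u₀ v₀ u₁ v₁ u₂ v₂ : ℤ} (hD : Squarefree D)
    (h₀ : u₀ ^ 2 + D * v₀ ^ 2 = N) (h₁ : u₁ ^ 2 + D * v₁ ^ 2 = N) (h₂ : u₂ ^ 2 + D * v₂ ^ 2 = N)
    (c₀ : IsCoprime u₀ v₀) (c₁ : IsCoprime u₁ v₁) (hN : 0 < N)
    (hg₁ : g = Int.gcd N (u₁ * v₀ - u₀ * v₁)) (hg₂ : g = Int.gcd N (u₂ * v₀ - u₀ * v₂)) :
    N ∣ 2 * (u₁ * v₂ - u₂ * v₁) := by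
  have cop : ∀ {u v : ℤ}, u ^ 2 + D * v ^ 2 = N → IsCoprime u v → IsCoprime v N := by
    intro u v h c
    have : IsCoprime v (u ^ 2 + v * (D * v)) := (c.symm.pow_right (n := 2)).add_mul_left_right _
    rwa [← h, show D * v ^ 2 = v * (D * v) by ring]
  have cN₀ := cop h₀ c₀
  have cN₁ := cop h₁ c₁
  obtain ⟨m, hm⟩ : g ∣ N := hg₁ ▸ Int.gcd_dvd_left ..
  have hg0 : g ≠ 0 := by rintro rfl; simp at hm; omega
  have plus : ∀ {u v : ℤ}, u ^ 2 + D * v ^ 2 = N → g = Int.gcd N (u * v₀ - u₀ * v) →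
      g ∣ u * v₀ - u₀ * v ∧ m ∣ u * v₀ + u₀ * v := by
    intro u v h hg
    refine ⟨hg ▸ Int.gcd_dvd_right .., ?_⟩
    have hd : N ∣ (u * v₀ - u₀ * v) * (u * v₀ + u₀ * v) :=
      ⟨v₀ ^ 2 - v ^ 2, by linear_combination v₀ ^ 2 * h - v ^ 2 * h₀⟩
    have hb : g = N * Int.gcdA N (u * v₀ - u₀ * v) +
        (u * v₀ - u₀ * v) * Int.gcdB N (u * v₀ - u₀ * v) := by
      rw [hg]; exact Int.gcd_eq_gcd_ab ..
    refine Int.dvd_of_mul_dvd_mul_left hg0 ?_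
    rw [← hm, show g * (u * v₀ + u₀ * v) = _ from congrArg (· * _) hb, add_mul]
    refine dvd_add (Dvd.intro _ (mul_assoc ..).symm) ?_
    rw [mul_right_comm]
    exact hd.mul_right _
  obtain ⟨hga, hma⟩ := plus h₁ hg₁
  obtain ⟨hgb, hmb⟩ := plus h₂ hg₂
  have cg : IsCoprime g v₀ := (cN₀.of_isCoprime_of_dvd_right ⟨m, hm⟩).symm
  have cm : IsCoprime m v₀ := (cN₀.of_isCoprime_of_dvd_right ⟨g, by rw [hm, mul_comm]⟩).symm
  have hgW : g ∣ u₁ * v₂ - u₂ * v₁ := by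
    refine cg.dvd_of_dvd_mul_left (y := v₀) ?_
    have := dvd_sub (hga.mul_right v₂) (hgb.mul_right v₁)
    convert this using 1; ring
  have hmW : m ∣ u₁ * v₂ - u₂ * v₁ := by
    refine cm.dvd_of_dvd_mul_left (y := v₀) ?_
    have := dvd_sub (hma.mul_right v₂) (hmb.mul_right v₁)
    convert this using 1; ring
  -- the greatest common divisor of the two complementary factors divides two
  have h2 : ((Int.gcd g m : ℕ) : ℤ) ∣ 2 := by
    set h : ℤ := ((Int.gcd g m : ℕ) : ℤ)
    have hhg : h ∣ g := Int.gcd_dvd_left ..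
    have hhm : h ∣ m := Int.gcd_dvd_right ..
    have hhN : h ^ 2 ∣ N := by rw [hm, sq]; exact mul_dvd_mul hhg hhm
    have ch : ∀ {v : ℤ}, IsCoprime v N → IsCoprime h v := fun c =>
      (c.of_isCoprime_of_dvd_right (hhg.trans ⟨m, hm⟩)).symm
    have hu : h ∣ 2 * u₁ := by
      refine (ch cN₀).dvd_of_dvd_mul_right ?_
      have := dvd_add (hhg.trans hga) (hhm.trans hma)
      convert this using 1; ring
    refine dvd_two_of_sq_dvd_four_mul hD ?_
    refine ((ch cN₁).pow (m := 2) (n := 2)).dvd_of_dvd_mul_right ?_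
    have := dvd_sub (hhN.mul_left 4) (pow_dvd_pow_of_dvd hu 2)
    convert this using 1
    linear_combination 4 * h₁
  have hb := Int.gcd_eq_gcd_ab g m
  have hgcd : N ∣ (Int.gcd g m : ℕ) * (u₁ * v₂ - u₂ * v₁) := by
    rw [hb, add_mul, hm]
    refine dvd_add ?_ ?_
    · rw [mul_right_comm]; exact (mul_dvd_mul_left g hmW).mul_right _
    · rw [mul_right_comm, mul_comm g]; exact (mul_dvd_mul_left m hgW).mul_right _
  exact hgcd.trans (mul_dvd_mul_right h2 _)

theorem card_primitive_reps_le {D : ℤ} (hD0 : 0 < D) (hD : Squarefree D) {N : ℕ} (hN : N ≠ 0) :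
    ((sqAddMulSqReps D N).filter fun p => IsCoprime p.1 p.2).card ≤ 10 * N.divisors.card := by
  classical
  set S := (sqAddMulSqReps D N).filter fun p => IsCoprime p.1 p.2
  have hS : ∀ {p : ℤ × ℤ}, p ∈ S → p.1 ^ 2 + D * p.2 ^ 2 = N ∧ IsCoprime p.1 p.2 := fun hp =>
    ⟨(mem_sqAddMulSqReps hD0).1 (Finset.mem_filter.1 hp).1, (Finset.mem_filter.1 hp).2⟩
  have hNpos : (0 : ℤ) < N := by positivity
  rcases S.eq_empty_or_nonempty with h | ⟨p₀, hp₀⟩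
  · simp [h]
  obtain ⟨h₀, c₀⟩ := hS hp₀
  refine Finset.card_le_mul_card_image_of_maps_to
    (f := fun p : ℤ × ℤ => Int.gcd N (p.1 * p₀.2 - p₀.1 * p.2)) (fun p _ => ?_) 10 fun g _ => ?_
  · rw [Nat.mem_divisors]
    exact ⟨by exact_mod_cast Int.gcd_dvd_left (N : ℤ) (p.1 * p₀.2 - p₀.1 * p.2), hN⟩
  rcases (S.filter fun p => Int.gcd N (p.1 * p₀.2 - p₀.1 * p.2) = g).eq_empty_or_nonempty
    with h | ⟨p₁, hp₁⟩
  · simp [h]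
  rw [Finset.mem_filter] at hp₁
  obtain ⟨h₁, c₁⟩ := hS hp₁.1
  have hcard : (Finset.Icc (-2 : ℤ) 2 ×ˢ (Finset.univ : Finset Bool)).card = 10 := rfl
  rw [← hcard]
  have hdvd : ∀ p ∈ S.filter fun p => Int.gcd N (p.1 * p₀.2 - p₀.1 * p.2) = g,
      (N : ℤ) ∣ 2 * (p₁.1 * p.2 - p.1 * p₁.2) := fun p hp => by
    rw [Finset.mem_filter] at hp
    exact dvd_two_mul_cross hD h₀ h₁ (hS hp.1).1 c₀ c₁ hNpos (congrArg _ hp₁.2.symm)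
      (congrArg _ hp.2.symm)
  have brahmagupta : ∀ p ∈ S, (p₁.1 * p.1 + D * (p₁.2 * p.2)) ^ 2 +
      D * (p₁.1 * p.2 - p.1 * p₁.2) ^ 2 = (N : ℤ) ^ 2 := fun p hp => by
    have h := (hS hp).1
    linear_combination (p₁.1 ^ 2 + D * p₁.2 ^ 2) * h + (N : ℤ) * h₁
  refine Finset.card_le_card_of_injOn
    (fun p => (2 * (p₁.1 * p.2 - p.1 * p₁.2) / N, decide (0 ≤ p₁.1 * p.1 + D * (p₁.2 * p.2))))
    (fun p hp => ?_) fun p hp r hr hpr => ?_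
  · obtain ⟨k, hk⟩ := hdvd p hp
    have hb := brahmagupta p (Finset.mem_filter.1 hp).1
    simp only [Finset.coe_product, Set.mem_prod, Finset.coe_Icc, Set.mem_Icc, Finset.coe_univ,
      Set.mem_univ, and_true]
    rw [hk, Int.mul_ediv_cancel_left _ hNpos.ne']
    have hk4 : k ^ 2 ≤ 2 ^ 2 := by
      have h1 : D * k ^ 2 * (N : ℤ) ^ 2 ≤ 4 * (N : ℤ) ^ 2 := by
        have : D * k ^ 2 * (N : ℤ) ^ 2 = 4 * (D * (p₁.1 * p.2 - p.1 * p₁.2) ^ 2) := by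
          linear_combination -D * (2 * (p₁.1 * p.2 - p.1 * p₁.2) + N * k) * hk
        nlinarith [sq_nonneg (p₁.1 * p.1 + D * (p₁.2 * p.2))]
      have h2 := le_of_mul_le_mul_right h1 (by positivity)
      nlinarith [sq_nonneg k]
    exact abs_le.1 (abs_le_of_sq_le_sq hk4 (by norm_num))
  · have hpS := (Finset.mem_filter.1 hp).1
    have hrS := (Finset.mem_filter.1 hr).1
    obtain ⟨k, hk⟩ := hdvd p hp
    obtain ⟨l, hl⟩ := hdvd r hr
    have hbp := brahmagupta p hpS
    have hbr := brahmagupta r hrS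
    simp only [Prod.mk.injEq, hk, hl, Int.mul_ediv_cancel_left _ hNpos.ne', decide_eq_decide]
      at hpr
    obtain ⟨rfl, hsign⟩ := hpr
    have hW : p₁.1 * p.2 - p.1 * p₁.2 = p₁.1 * r.2 - r.1 * p₁.2 := by linarith
    have hT : p₁.1 * p.1 + D * (p₁.2 * p.2) = p₁.1 * r.1 + D * (p₁.2 * r.2) := by
      rw [hW] at hbp
      rcases sq_eq_sq_iff_eq_or_eq_neg.1 (show (p₁.1 * p.1 + D * (p₁.2 * p.2)) ^ 2 =
        (p₁.1 * r.1 + D * (p₁.2 * r.2)) ^ 2 by linarith) with h | h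
      · exact h
      · omega
    refine Prod.ext (mul_left_cancel₀ hNpos.ne' ?_) (mul_left_cancel₀ hNpos.ne' ?_)
    · rw [← h₁]; linear_combination p₁.1 * hT - D * p₁.2 * hW
    · rw [← h₁]; linear_combination p₁.2 * hT + p₁.1 * hW

theorem card_reps_le_of_squarefree {D : ℤ} (hD0 : 0 < D) (hD : Squarefree D) {N : ℕ} (hN : N ≠ 0) :
    (sqAddMulSqReps D N).card ≤ 10 * N.divisors.card * N.divisors.card := by
  classical
  have hfac : ∀ p ∈ sqAddMulSqReps D N, ∃ M : ℕ, N = Int.gcd p.1 p.2 ^ 2 * M ∧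
      ∃ r ∈ sqAddMulSqReps D M, IsCoprime r.1 r.2 ∧
        p = ((Int.gcd p.1 p.2 : ℤ) * r.1, (Int.gcd p.1 p.2 : ℤ) * r.2) := by
    intro p hp
    rw [mem_sqAddMulSqReps hD0] at hp
    have hg : 0 < Int.gcd p.1 p.2 := Nat.pos_of_ne_zero fun h => by
      obtain ⟨h1, h2⟩ := Int.gcd_eq_zero_iff.1 h
      simp [h1, h2] at hp; omega
    obtain ⟨u, v, hc, hu, hv⟩ := Int.exists_gcd_one hg
    set g := Int.gcd p.1 p.2
    obtain ⟨M, hM⟩ := Int.eq_ofNat_of_zero_le (show 0 ≤ u ^ 2 + D * v ^ 2 by positivity)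
    refine ⟨M, ?_, (u, v), (mem_sqAddMulSqReps hD0).2 hM, Int.isCoprime_iff_gcd_eq_one.2 hc,
      Prod.ext (by rw [hu, mul_comm]) (by rw [hv, mul_comm])⟩
    rw [hu, hv] at hp
    zify
    rw [← hp]
    linear_combination (g : ℤ) ^ 2 * hM
  refine Finset.card_le_mul_card_image_of_maps_to
    (f := fun p : ℤ × ℤ => Int.gcd p.1 p.2) (fun p hp => ?_) _ fun g _ => ?_
  · obtain ⟨M, hM, -⟩ := hfac p hp
    exact Nat.mem_divisors.2 ⟨⟨Int.gcd p.1 p.2 * M, by rw [← mul_assoc, ← sq]; exact hM⟩, hN⟩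
  rcases ((sqAddMulSqReps D N).filter fun p => Int.gcd p.1 p.2 = g).eq_empty_or_nonempty
    with h | ⟨p₁, hp₁⟩
  · simp [h]
  rw [Finset.mem_filter] at hp₁
  obtain ⟨M, hM, -⟩ := hfac p₁ hp₁.1
  rw [hp₁.2] at hM
  have hg : g ≠ 0 := by rintro rfl; simp at hM; exact hN hM
  have hM0 : M ≠ 0 := by rintro rfl; simp at hM; exact hN hM
  calc _ ≤ (((sqAddMulSqReps D M).filter fun p => IsCoprime p.1 p.2).image
          fun r => ((g : ℤ) * r.1, (g : ℤ) * r.2)).card := by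
        refine Finset.card_le_card fun p hp => ?_
        rw [Finset.mem_filter] at hp
        obtain ⟨M', hM', r, hr, hc, hpr⟩ := hfac p hp.1
        rw [hp.2] at hM' hpr
        obtain rfl : M' = M :=
          Nat.eq_of_mul_eq_mul_left (pow_pos (Nat.pos_of_ne_zero hg) 2) (hM'.symm.trans hM)
        exact Finset.mem_image.2 ⟨r, Finset.mem_filter.2 ⟨hr, hc⟩, hpr.symm⟩
    _ ≤ _ := Finset.card_image_le
    _ ≤ 10 * M.divisors.card := card_primitive_reps_le hD0 hD hM0
    _ ≤ _ := by
      gcongr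
      exact ⟨g ^ 2, by rw [hM, mul_comm]⟩

theorem card_sqAddMulSqReps_le {D : ℤ} (hD0 : 0 < D) (N : ℕ) :
    (sqAddMulSqReps D N).card ≤ 10 * N.divisors.card * N.divisors.card + 1 := by
  rcases eq_or_ne N 0 with rfl | hN
  · refine (Finset.card_le_one.2 fun p hp r hr => ?_).trans (Nat.le_add_left _ _)
    have zero : ∀ p ∈ sqAddMulSqReps D 0, p = 0 := fun p hp => by
      rw [mem_sqAddMulSqReps hD0] at hp
      have h1 : p.1 ^ 2 = 0 := by push_cast at hp; nlinarith [sq_nonneg p.1, sq_nonneg p.2]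
      have h2 : D * p.2 ^ 2 = 0 := by simpa [h1] using hp
      exact Prod.ext (by simpa using h1) (by simpa [hD0.ne'] using h2)
    rw [zero p hp, zero r hr]
  refine le_trans ?_ (Nat.le_succ _)
  lift D to ℕ using hD0.le
  obtain ⟨D', f, hD', hf, rfl, hsq⟩ := Nat.sq_mul_squarefree_of_pos (by exact_mod_cast hD0)
  have hD'0 : (0 : ℤ) < D' := by exact_mod_cast hD'
  refine le_trans ?_ (card_reps_le_of_squarefree hD'0 (Int.squarefree_natCast.2 hsq) hN)
  refine Finset.card_le_card_of_injOn (fun p => (p.1, f * p.2)) (fun p hp => ?_)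
    fun p _ r _ hpr => ?_
  · rw [Finset.mem_coe, mem_sqAddMulSqReps hD0] at hp
    rw [Finset.mem_coe, mem_sqAddMulSqReps hD'0, ← hp]
    push_cast; ring
  · simp only [Prod.mk.injEq] at hpr
    exact Prod.ext hpr.1 (mul_left_cancel₀ (by exact_mod_cast hf.ne') hpr.2)

theorem card_sphere_inter_plane_le (x : Fin 3 → ℤ) (σ : Equiv.Perm (Fin 3))
    (hx : 0 < x (σ 0) ^ 2 + x (σ 2) ^ 2) (a c : ℤ) {N : ℕ}
    (hN : N = ((x (σ 0) ^ 2 + x (σ 2) ^ 2) * (x ⬝ᵥ x * a - c ^ 2)).toNat) :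
    Nat.card {z : Fin 3 → ℤ // z ⬝ᵥ z = a ∧ z ⬝ᵥ x = c} ≤
      10 * N.divisors.card * N.divisors.card + 1 := by
  have dot : ∀ f g : Fin 3 → ℤ, f ⬝ᵥ g =
      f (σ 0) * g (σ 0) + f (σ 1) * g (σ 1) + f (σ 2) * g (σ 2) := fun f g => by
    rw [dotProduct, ← Equiv.sum_comp σ, Fin.sum_univ_three]
  have hn : 0 < x ⬝ᵥ x := by rw [dot]; nlinarith [sq_nonneg (x (σ 1))]
  have maps : ∀ z : Fin 3 → ℤ, z ⬝ᵥ z = a → z ⬝ᵥ x = c →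
      (x ⬝ᵥ x * z (σ 1) - c * x (σ 1), z (σ 2) * x (σ 0) - z (σ 0) * x (σ 2)) ∈
        sqAddMulSqReps (x ⬝ᵥ x) N := by
    rintro z rfl rfl
    have key : (x ⬝ᵥ x * z (σ 1) - z ⬝ᵥ x * x (σ 1)) ^ 2 +
        x ⬝ᵥ x * (z (σ 2) * x (σ 0) - z (σ 0) * x (σ 2)) ^ 2 =
        (x (σ 0) ^ 2 + x (σ 2) ^ 2) * (x ⬝ᵥ x * z ⬝ᵥ z - (z ⬝ᵥ x) ^ 2) := by
      simp only [dot]; ring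
    rw [mem_sqAddMulSqReps hn, hN, Int.toNat_of_nonneg (key ▸ by positivity), key]
  refine le_trans ?_ (card_sqAddMulSqReps_le hn N)
  rw [← Nat.card_eq_finsetCard]
  refine Nat.card_le_card_of_injective (fun z => ⟨_, maps z.1 z.2.1 z.2.2⟩) ?_
  rintro ⟨z, _, hz⟩ ⟨w, _, hw⟩ h
  obtain ⟨h1, h2⟩ := Prod.ext_iff.1 (Subtype.ext_iff.1 h)
  dsimp only at h1 h2
  refine Subtype.ext ?_
  have e1 : z (σ 1) = w (σ 1) := mul_left_cancel₀ hn.ne' (sub_left_inj.1 h1)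
  rw [dot] at hz hw
  rw [e1] at hz
  have h3 : z (σ 0) * x (σ 0) + z (σ 2) * x (σ 2) = w (σ 0) * x (σ 0) + w (σ 2) * x (σ 2) := by
    linarith
  have e0 : z (σ 0) = w (σ 0) := mul_left_cancel₀ hx.ne' (by
    linear_combination x (σ 0) * h3 - x (σ 2) * h2)
  have e2 : z (σ 2) = w (σ 2) := mul_left_cancel₀ hx.ne' (by
    linear_combination x (σ 2) * h3 + x (σ 0) * h2)
  funext i
  obtain ⟨j, rfl⟩ := σ.surjective i
  fin_cases j
  exacts [e0, e1, e2]

/-- For every `ε > 0` there is `C > 0` such that for every integer `q > 1`, every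
nonzero `x ∈ ℤ³` and all integers `0 ≤ a, b ≤ 4q²`, the number of `z ∈ ℤ³` with
`⟨z,z⟩ = a` and `⟨z-x, z-x⟩ = b` is at most `C · q^ε`. -/
theorem sphere_intersection_count :
    ∀ ε : ℝ, 0 < ε → ∃ C : ℝ, 0 < C ∧ ∀ q : ℕ, 1 < q →
      ∀ x : Fin 3 → ℤ, x ≠ 0 → ∀ a b : ℤ,
        0 ≤ a → a ≤ 4 * (q : ℤ) ^ 2 → 0 ≤ b → b ≤ 4 * (q : ℤ) ^ 2 →
        (Nat.card {z : Fin 3 → ℤ // z ⬝ᵥ z = a ∧ (z - x) ⬝ᵥ (z - x) = b} : ℝ) ≤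
          C * (q : ℝ) ^ ε := by
  intro ε hε
  obtain ⟨C, hC, hdiv⟩ := exists_card_divisors_le_mul_rpow (show 0 < ε / 32 by positivity)
  refine ⟨10 * C ^ 2 + 1, by positivity, fun q hq x hx a b ha0 ha hb0 hb => ?_⟩
  have hq1 : (1 : ℝ) ≤ q := by exact_mod_cast hq.le
  rcases isEmpty_or_nonempty {z : Fin 3 → ℤ // z ⬝ᵥ z = a ∧ (z - x) ⬝ᵥ (z - x) = b}
    with hempty | ⟨⟨z₀, hz₀a, hz₀b⟩⟩
  · rw [Nat.card_of_isEmpty, Nat.cast_zero]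
    positivity
  have hsub : ∀ z : Fin 3 → ℤ, (z - x) ⬝ᵥ (z - x) = z ⬝ᵥ z - 2 * z ⬝ᵥ x + x ⬝ᵥ x := fun z => by
    simp only [sub_dotProduct, dotProduct_sub, dotProduct_comm x z]; ring
  have hplane : ∀ z : Fin 3 → ℤ, (z ⬝ᵥ z = a ∧ (z - x) ⬝ᵥ (z - x) = b) ↔
      (z ⬝ᵥ z = a ∧ z ⬝ᵥ x = z₀ ⬝ᵥ x) := fun z => by
    rw [hsub] at hz₀b ⊢
    constructor <;> rintro ⟨h1, h2⟩ <;> refine ⟨h1, ?_⟩ <;> linarith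
  obtain ⟨i, hi⟩ := Function.ne_iff.1 hx
  set σ := Equiv.swap 0 i
  have hσ : σ 0 = i := Equiv.swap_apply_left 0 i
  have hpos : 0 < x (σ 0) ^ 2 + x (σ 2) ^ 2 := by
    rw [hσ]
    have : x i ≠ 0 := hi
    positivity
  have hle : x (σ 0) ^ 2 + x (σ 2) ^ 2 ≤ x ⬝ᵥ x := by
    rw [dotProduct, ← Equiv.sum_comp σ, Fin.sum_univ_three]
    nlinarith [sq_nonneg (x (σ 1))]
  have hxx : x ⬝ᵥ x ≤ 16 * (q : ℤ) ^ 2 := by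
    have h1 : 0 ≤ ((2 : ℤ) • z₀ - x) ⬝ᵥ ((2 : ℤ) • z₀ - x) := Finset.sum_nonneg fun i _ => mul_self_nonneg _
    rw [hsub] at h1 hz₀b
    simp only [smul_dotProduct, dotProduct_smul, smul_eq_mul] at h1
    linarith
  obtain ⟨N, hN⟩ : ∃ N, N = ((x (σ 0) ^ 2 + x (σ 2) ^ 2) *
    (x ⬝ᵥ x * a - (z₀ ⬝ᵥ x) ^ 2)).toNat := ⟨_, rfl⟩
  have hNq : N ≤ q ^ 16 := by
    rw [hN, Int.toNat_le]
    push_cast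
    calc _ ≤ (x (σ 0) ^ 2 + x (σ 2) ^ 2) * (x ⬝ᵥ x * a) := by
          gcongr; linarith [sq_nonneg (z₀ ⬝ᵥ x)]
      _ ≤ (16 * (q : ℤ) ^ 2) * ((16 * (q : ℤ) ^ 2) * (4 * (q : ℤ) ^ 2)) := by
          have := hpos.le.trans hle
          gcongr
          exact hle.trans hxx
      _ = 2 ^ 10 * (q : ℤ) ^ 6 := by ring
      _ ≤ (q : ℤ) ^ 10 * (q : ℤ) ^ 6 := by gcongr; exact_mod_cast hq
      _ = (q : ℤ) ^ 16 := by ring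
  have hdN : (N.divisors.card : ℝ) ≤ C * (q : ℝ) ^ (ε / 2) := by
    rcases eq_or_ne N 0 with rfl | hN0
    · simp only [Nat.divisors_zero, Finset.card_empty, Nat.cast_zero]
      positivity
    calc (N.divisors.card : ℝ) ≤ C * (N : ℝ) ^ (ε / 32) := hdiv N hN0
      _ ≤ C * ((q : ℝ) ^ 16) ^ (ε / 32) := by gcongr; exact_mod_cast hNq
      _ = C * (q : ℝ) ^ (ε / 2) := by
        rw [← Real.rpow_natCast, ← Real.rpow_mul (by positivity)]
        congr 2; push_cast; ring
  have hcard := card_sphere_inter_plane_le x σ hpos a (z₀ ⬝ᵥ x) hN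
  rw [Nat.card_congr (Equiv.subtypeEquivRight hplane)]
  calc _ ≤ ((10 * N.divisors.card * N.divisors.card + 1 : ℕ) : ℝ) := by exact_mod_cast hcard
    _ = 10 * (N.divisors.card : ℝ) ^ 2 + 1 := by push_cast; ring
    _ ≤ 10 * (C * (q : ℝ) ^ (ε / 2)) ^ 2 + (q : ℝ) ^ ε := by
      gcongr
      exact Real.one_le_rpow hq1 hε.le
    _ = (10 * C ^ 2 + 1) * (q : ℝ) ^ ε := by
      rw [mul_pow, ← Real.rpow_natCast ((q : ℝ) ^ (ε / 2)), ← Real.rpow_mul (by positivity)]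
      norm_num
      ring
end

section
/- There exist a constant c > 0 and an integer q₀ such that for every integer q ≥ q₀ and all integers r₁, r₂, r₃ with 1 ≤ rᵢ ≤ q² and M_{rᵢ} ≥ q/2 for i = 1,2,3, the number of linearly independent triples (x,y,z) ∈ (ℤ³)³ with ⟨x,x⟩ = r₁, ⟨y,y⟩ = r₂, and ⟨z,z⟩ = r₃ is at least c · M_{r₁} · M_{r₂} · M_{r₃}. -/
open Matrix

/-- `M r`: the number of lattice points on the sphere of radius `√r` centered at the
origin, i.e. `#{x ∈ ℤ³ : x₁² + x₂² + x₃² = r}`. -/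
noncomputable def latticePointsOnSphere (r : ℕ) : ℕ :=
  Nat.card {x : Fin 3 → ℤ // x ⬝ᵥ x = (r : ℤ)}

/-- The lattice points of squared norm `r`, as a finite set. -/
noncomputable def spherePoints (r : ℕ) : Finset (Fin 3 → ℤ) :=
  (Finset.Icc (fun _ => -(r : ℤ)) (fun _ => (r : ℤ))).filter (fun x => x ⬝ᵥ x = (r : ℤ))

lemma mem_spherePoints {r : ℕ} {x : Fin 3 → ℤ} : x ∈ spherePoints r ↔ x ⬝ᵥ x = (r : ℤ) := by
  simp only [spherePoints, Finset.mem_filter, Finset.mem_Icc, and_iff_right_iff_imp]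
  intro h
  have key : ∀ i, x i * x i ≤ r := fun i =>
    h ▸ Finset.single_le_sum (f := fun j => x j * x j)
      (fun j _ => mul_self_nonneg (x j)) (Finset.mem_univ i)
  have habs : ∀ i, |x i| ≤ r := fun i =>
    (Int.le_self_sq |x i|).trans (by rw [sq_abs, sq]; exact key i)
  exact ⟨fun i => (abs_le.mp (habs i)).1, fun i => (abs_le.mp (habs i)).2⟩

lemma latticePointsOnSphere_eq_card (r : ℕ) :
    latticePointsOnSphere r = (spherePoints r).card := by
  rw [latticePointsOnSphere, ← Nat.card_eq_finsetCard]
  exact Nat.card_congr (Equiv.subtypeEquivRight fun _ => mem_spherePoints.symm)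

/-- The isometry of `ℤ³` that swaps two coordinates `p.1`, `p.2.1` and then, if `p.2.2` is true,
changes the sign of coordinate `p.1`. -/
def swapFlip (p : Fin 3 × Fin 3 × Bool) (z : Fin 3 → ℤ) : Fin 3 → ℤ :=
  fun k => (if p.2.2 ∧ k = p.1 then -1 else 1) * z (Equiv.swap p.1 p.2.1 k)

lemma swapFlip_dotProduct_self (p : Fin 3 × Fin 3 × Bool) (z : Fin 3 → ℤ) :
    swapFlip p z ⬝ᵥ swapFlip p z = z ⬝ᵥ z := by
  simp only [dotProduct, swapFlip]
  rw [← Equiv.sum_comp (Equiv.swap p.1 p.2.1) (fun k => z k * z k)]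
  refine Finset.sum_congr rfl fun k _ => ?_
  split_ifs <;> ring

lemma swapFlip_injective (p : Fin 3 × Fin 3 × Bool) : Function.Injective (swapFlip p) := by
  intro z w h
  funext k
  have := congrFun h (Equiv.swap p.1 p.2.1 k)
  simp only [swapFlip, Equiv.swap_apply_self] at this
  split_ifs at this <;> simpa using this

/-- The orbit of a nonzero vector under the maps `swapFlip` is not contained in a plane. -/
lemma exists_dotProduct_swapFlip_ne_zero {n z : Fin 3 → ℤ} (hn : n ≠ 0) (hz : z ≠ 0) :
    ∃ p, n ⬝ᵥ swapFlip p z ≠ 0 := by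
  obtain ⟨i, hi⟩ := Function.ne_iff.mp hn
  obtain ⟨j, hj⟩ := Function.ne_iff.mp hz
  by_contra! h
  have hdiff : n ⬝ᵥ swapFlip (i, j, false) z - n ⬝ᵥ swapFlip (i, j, true) z
      = 2 * (n i * z j) := by
    rw [← dotProduct_sub, dotProduct, Finset.sum_eq_single i]
    · simp [swapFlip]; ring
    · intro k _ hk
      simp [swapFlip, hk]
    · simp
  rw [h, h] at hdiff
  have : n i * z j ≠ 0 := mul_ne_zero hi hj
  omega

/-- At least one eighteenth of the lattice points on a sphere lie off a given central plane. -/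
lemma card_spherePoints_le {r : ℕ} (hr : 1 ≤ r) {n : Fin 3 → ℤ} (hn : n ≠ 0) :
    (spherePoints r).card ≤ 18 * ((spherePoints r).filter (fun z => n ⬝ᵥ z ≠ 0)).card := by
  have hcover : spherePoints r ⊆ Finset.univ.biUnion fun p =>
      (spherePoints r).filter fun z => n ⬝ᵥ swapFlip p z ≠ 0 := by
    intro z hz
    have hz0 : z ≠ 0 := by
      rintro rfl
      simp [mem_spherePoints] at hz
      omega
    simpa [hz] using exists_dotProduct_swapFlip_ne_zero hn hz0
  calc (spherePoints r).card ≤ _ := Finset.card_le_card hcover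
    _ ≤ ∑ p, ((spherePoints r).filter fun z => n ⬝ᵥ swapFlip p z ≠ 0).card :=
      Finset.card_biUnion_le
    _ ≤ ∑ _p : Fin 3 × Fin 3 × Bool, ((spherePoints r).filter fun z => n ⬝ᵥ z ≠ 0).card := by
      refine Finset.sum_le_sum fun p _ => ?_
      refine Finset.card_le_card_of_injOn (swapFlip p) ?_ (swapFlip_injective p).injOn
      intro z hz
      simpa [mem_spherePoints, swapFlip_dotProduct_self] using hz
    _ = _ := by simp

lemma exists_integral_normal (x : Fin 3 → ℤ) :
    ∃ n : Fin 3 → ℤ, n ≠ 0 ∧ n ⬝ᵥ x = 0 := by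
  by_cases h : x 0 = 0
  · exact ⟨![1, 0, 0], by simp, by simp [dotProduct, Fin.sum_univ_three, h]⟩
  · exact ⟨![x 1, -x 0, 0], by simp [h], by simp [dotProduct, Fin.sum_univ_three]; ring⟩

lemma crossProduct_ne_zero_of_dotProduct {n x y : Fin 3 → ℤ} (hx : x ≠ 0)
    (hnx : n ⬝ᵥ x = 0) (hny : n ⬝ᵥ y ≠ 0) : crossProduct x y ≠ 0 := by
  intro h
  have htriple : crossProduct n (crossProduct x y) = (n ⬝ᵥ y) • x - (n ⬝ᵥ x) • y := by
    ext i
    fin_cases i <;> simp [cross_apply, dotProduct, Fin.sum_univ_three] <;> ring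
  rw [h, hnx, map_zero, zero_smul, sub_zero] at htriple
  exact smul_ne_zero hny hx htriple.symm

lemma linearIndependent_of_crossProduct_dotProduct {x y z : Fin 3 → ℤ}
    (h : crossProduct x y ⬝ᵥ z ≠ 0) :
    LinearIndependent ℚ (fun i : Fin 3 => fun j => ((![x, y, z] i j : ℚ))) := by
  have hdet : (Matrix.of ![x, y, z]).det = crossProduct x y ⬝ᵥ z := by
    simp [Matrix.det_fin_three, cross_apply, dotProduct, Fin.sum_univ_three]
    ring
  have hQ : ((Matrix.of ![x, y, z]).map (Int.castRingHom ℚ)).det ≠ 0 := by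
    rw [← RingHom.mapMatrix_apply, ← RingHom.map_det, hdet]
    simpa using h
  exact Matrix.linearIndependent_rows_of_det_ne_zero hQ

/-- A positive proportion of all triples of lattice points on three spheres has `z` outside the
plane spanned by the noncollinear `x` and `y`. -/
lemma card_mul_card_mul_card_le {r₁ r₂ r₃ : ℕ} (h₁ : 1 ≤ r₁) (h₂ : 1 ≤ r₂) (h₃ : 1 ≤ r₃) :
    (spherePoints r₁).card * ((spherePoints r₂).card * (spherePoints r₃).card) ≤
      324 * ((spherePoints r₁ ×ˢ spherePoints r₂ ×ˢ spherePoints r₃).filter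
        (fun t => crossProduct t.1 t.2.1 ⬝ᵥ t.2.2 ≠ 0)).card := by
  rw [Finset.card_filter, Finset.sum_product, Finset.mul_sum, ← smul_eq_mul]
  refine Finset.card_nsmul_le_sum _ _ _ fun x hx => ?_
  have hx0 : x ≠ 0 := by
    rintro rfl
    simp [mem_spherePoints] at hx
    omega
  obtain ⟨n, hn, hnx⟩ := exists_integral_normal x
  rw [Finset.sum_product]
  simp only [← Finset.card_filter]
  calc (spherePoints r₂).card * (spherePoints r₃).card
      ≤ 18 * ((spherePoints r₂).filter (fun y => n ⬝ᵥ y ≠ 0)).card * (spherePoints r₃).card :=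
        Nat.mul_le_mul_right _ (card_spherePoints_le h₂ hn)
    _ = 18 * ∑ y ∈ (spherePoints r₂).filter (fun y => n ⬝ᵥ y ≠ 0), (spherePoints r₃).card := by
        rw [Finset.sum_const, smul_eq_mul, mul_assoc]
    _ ≤ 18 * ∑ y ∈ (spherePoints r₂).filter (fun y => n ⬝ᵥ y ≠ 0),
          18 * ((spherePoints r₃).filter (fun z => crossProduct x y ⬝ᵥ z ≠ 0)).card := by
        gcongr with y hy
        exact card_spherePoints_le h₃
          (crossProduct_ne_zero_of_dotProduct hx0 hnx (Finset.mem_filter.mp hy).2)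
    _ ≤ 18 * ∑ y ∈ spherePoints r₂,
          18 * ((spherePoints r₃).filter (fun z => crossProduct x y ⬝ᵥ z ≠ 0)).card := by
        gcongr
        exact Finset.filter_subset _ _
    _ = _ := by rw [← Finset.mul_sum, ← mul_assoc]; norm_num

/-- There exist `c > 0` and `q₀` such that for all `q ≥ q₀` and all `1 ≤ r₁,r₂,r₃ ≤ q²`
with `M_{rᵢ} ≥ q/2`, the number of linearly independent triples `(x,y,z) ∈ (ℤ³)³` with
`⟨x,x⟩ = r₁`, `⟨y,y⟩ = r₂`, `⟨z,z⟩ = r₃` is at least `c · M_{r₁} · M_{r₂} · M_{r₃}`. -/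
theorem many_nondegenerate_triples :
    ∃ c : ℝ, 0 < c ∧ ∃ q₀ : ℕ, ∀ q : ℕ, q₀ ≤ q →
      ∀ r₁ r₂ r₃ : ℕ,
        (1 ≤ r₁ ∧ r₁ ≤ q ^ 2 ∧ (q : ℝ) / 2 ≤ (latticePointsOnSphere r₁ : ℝ)) →
        (1 ≤ r₂ ∧ r₂ ≤ q ^ 2 ∧ (q : ℝ) / 2 ≤ (latticePointsOnSphere r₂ : ℝ)) →
        (1 ≤ r₃ ∧ r₃ ≤ q ^ 2 ∧ (q : ℝ) / 2 ≤ (latticePointsOnSphere r₃ : ℝ)) →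
        c * (latticePointsOnSphere r₁ : ℝ) * (latticePointsOnSphere r₂ : ℝ) *
            (latticePointsOnSphere r₃ : ℝ) ≤
          (Nat.card {t : (Fin 3 → ℤ) × (Fin 3 → ℤ) × (Fin 3 → ℤ) //
            LinearIndependent ℚ (fun i : Fin 3 =>
              fun j => ((![t.1, t.2.1, t.2.2] i j : ℚ))) ∧
            t.1 ⬝ᵥ t.1 = (r₁ : ℤ) ∧ t.2.1 ⬝ᵥ t.2.1 = (r₂ : ℤ) ∧
            t.2.2 ⬝ᵥ t.2.2 = (r₃ : ℤ)} : ℝ) := by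
  refine ⟨1 / 324, by norm_num, 0, ?_⟩
  rintro q - r₁ r₂ r₃ ⟨h₁, -, -⟩ ⟨h₂, -, -⟩ ⟨h₃, -, -⟩
  have hcount := card_mul_card_mul_card_le h₁ h₂ h₃
  have hle : ((spherePoints r₁ ×ˢ spherePoints r₂ ×ˢ spherePoints r₃).filter
      (fun t => crossProduct t.1 t.2.1 ⬝ᵥ t.2.2 ≠ 0)).card ≤
      Nat.card {t : (Fin 3 → ℤ) × (Fin 3 → ℤ) × (Fin 3 → ℤ) //
        LinearIndependent ℚ (fun i : Fin 3 => fun j => ((![t.1, t.2.1, t.2.2] i j : ℚ))) ∧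
        t.1 ⬝ᵥ t.1 = (r₁ : ℤ) ∧ t.2.1 ⬝ᵥ t.2.1 = (r₂ : ℤ) ∧ t.2.2 ⬝ᵥ t.2.2 = (r₃ : ℤ)} := by
    rw [← Set.ncard_coe_finset]
    refine Set.ncard_le_ncard ?_ ?_
    · intro t ht
      simp only [Finset.coe_filter, Finset.mem_product, mem_spherePoints, Set.mem_ofPred_eq] at ht
      exact ⟨linearIndependent_of_crossProduct_dotProduct ht.2, ht.1⟩
    · refine (spherePoints r₁ ×ˢ spherePoints r₂ ×ˢ spherePoints r₃).finite_toSet.subset ?_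
      intro t ht
      simpa [mem_spherePoints] using ht.2
  have hreal := Nat.cast_le (α := ℝ).mpr (hcount.trans (Nat.mul_le_mul_left 324 hle))
  push_cast at hreal
  simp only [latticePointsOnSphere_eq_card]
  linarith
end
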